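/- Let S = T((m,2); 0) for some positive integer m, and let T' = T((n_1,1), …, (n_l,1); 0) with l ≥ 2 (so n_1 < … < n_l are positive integers). Then the right-angled Artin groups G(S) and G(T') are not commensurable. -/

import Mathlib

/-!
The group of a tree of diameter 4 is `FreeGroup Z ⋊ FreeGroup J`, where `J` is the set of pivots and
`Z` consists of the center `c` and of the conjugates of the leaves (`equivModel`). Centralizers can
be computed there: an element has nonabelian centralizer exactly if it is conjugate to a power of
the generator of a non-leaf vertex (`special_of_NC`), and the centralizer of a nontrivial power of
`a v`, for `v` a non-leaf vertex, is the product of `⟨a v⟩` and of the free group on the neighbours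
of `v`. These facts are collected in `TreeData`.

Let `φ : H ≃* A` be an isomorphism between finite-index subgroups of the groups `G'` and `G` of two
such trees. It permutes the conjugates of nontrivial powers of non-leaf generators (`transfer`), so
it matches vertices of the Bass-Serre trees, and preserves adjacency. As these trees are bipartite,
the conjugates of the pivots of `G'` all correspond either to pivots or to conjugates of the center
(`hasType_pivot`).

Let `v'` be a pivot of `G'` and `N = [G' : H]!`. At each conjugate of `v'`, corresponding to a
conjugate of `v`, the map `φ` induces an isomorphism between finite-index subgroups `K` and `L` of
the free groups on the neighbours of `v'` and of `v`, so that their indices are related by the Euler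
characteristic (`euler_char`): `[F' : K] (|B v'| - 1) = [F : L] (|B v| - 1)`. Only one neighbour of
`v'`, the center `c'`, is not a leaf. A double count (`sum_length`) shows that the translation
lengths of the images of the conjugates of `c' ^ N`, summed over `F' ⧸ K`, total `N |per v|`
times the index of `L`, where `per v` is the set of non-leaf neighbours of `v`. These lengths are the
values of a function on `G' ⧸ H` that involves only the center and not the pivot `v'`. Summing over
the orbits of `F'` in `G' ⧸ H` (`orbit_sum`), its total `Σ` satisfies
`Σ (|B v| - 1) = N |per v| [G' : H] (|B v'| - 1)`.

If all pivots on the side of `G` have the same degree, then `|B v|` and `|per v|` are the same for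
all pivots `v'`, hence so is `|B v'|` (`card_pivot_eq`). The pivots of `T((n_1,1), …, (n_l,1); 0)` do
not all have the same degree, which gives the contradiction.
-/

/-- The defining relators of the right-angled Artin group of a simplicial graph:
one commutator for each edge. -/
def raagRels {V : Type} (G : SimpleGraph V) : Set (FreeGroup V) :=
  {r | ∃ u v : V, G.Adj u v ∧
    r = FreeGroup.of u * FreeGroup.of v * (FreeGroup.of u)⁻¹ * (FreeGroup.of v)⁻¹}

/-- The right-angled Artin group of a simplicial graph. -/
abbrev RAAG {V : Type} (G : SimpleGraph V) : Type := PresentedGroup (raagRels G)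

/-- Two groups are (abstractly) commensurable if they have isomorphic
subgroups of finite index. -/
def GroupsCommensurable (G H : Type*) [Group G] [Group H] : Prop :=
  ∃ (A : Subgroup G) (B : Subgroup H),
    A.FiniteIndex ∧ B.FiniteIndex ∧ Nonempty (↥A ≃* ↥B)

/-- The vertices of the tree `T((d₁,k₁),…,(d_l,k_l); q)` of diameter 4:
a center, `q` hairs, `k i` pivots of degree `d i + 1` for each `i`,
and `d i` leaves attached to each such pivot. -/
inductive T4V (l : ℕ) (d k : Fin l → ℕ) (q : ℕ) : Type where
  | center : T4V l d k q
  | hair : Fin q → T4V l d k q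
  | pivot : (i : Fin l) → Fin (k i) → T4V l d k q
  | leaf : (i : Fin l) → Fin (k i) → Fin (d i) → T4V l d k q

/-- Adjacency in the tree `T((d₁,k₁),…,(d_l,k_l); q)`: the center is joined to every
hair and every pivot, and each pivot is joined to its own leaves. -/
def t4Adj {l : ℕ} {d k : Fin l → ℕ} {q : ℕ} :
    T4V l d k q → T4V l d k q → Prop
  | .center, .hair _ => True
  | .center, .pivot _ _ => True
  | .pivot i j, .leaf i' j' _ => (⟨i, j⟩ : Σ i, Fin (k i)) = ⟨i', j'⟩
  | _, _ => False

/-- The tree `T((d₁,k₁),…,(d_l,k_l); q)` of diameter 4, as a simple graph. -/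
def t4Graph (l : ℕ) (d k : Fin l → ℕ) (q : ℕ) : SimpleGraph (T4V l d k q) :=
  SimpleGraph.fromRel t4Adj

namespace TreeRAAG

open FreeGroup hiding map_mul map_one map_inv

/-! ### Centralizers in free groups -/

/-- The exponent sum of the letter `s`. -/
noncomputable def expo {α : Type} [DecidableEq α] (s : α) : FreeGroup α →* Multiplicative ℤ :=
  FreeGroup.lift fun z => if z = s then Multiplicative.ofAdd 1 else 1

lemma expo_of_self {α : Type} [DecidableEq α] (s : α) :
    expo s (of s) = Multiplicative.ofAdd 1 := by simp [expo]

lemma expo_of_ne {α : Type} [DecidableEq α] {s t : α} (h : t ≠ s) : expo s (of t) = 1 := by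
  simp [expo, h]

/-- The centralizer of a letter in a free group is generated by it, by induction on the length of
the reduced word. -/
lemma mem_zpowers_of_commute_of {α : Type} (s : α) :
    ∀ (n : ℕ) (x : FreeGroup α), (by classical exact x.norm = n) →
      Commute x (of s) → x ∈ Subgroup.zpowers (of s) := by
  classical
  intro n
  induction n using Nat.strong_induction_on with
  | _ n ih =>
  intro x hx hc
  rcases hw : x.toWord with _ | ⟨⟨a, b⟩, L⟩
  · rw [toWord_eq_nil_iff] at hw
    simp [hw, one_mem]
  by_cases ha : a = s
  · subst ha
    -- strip the first letter, a power of `of s`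
    have hx' : x = mk [(a, b)] * mk L := by
      rw [← mk_toWord (x := x), hw, mul_mk]; rfl
    have hab : mk [(a, b)] ∈ Subgroup.zpowers (of a) := by
      cases b
      · have : (mk [(a, false)] : FreeGroup α) = (of a)⁻¹ := by simp [of, inv_mk, invRev]
        rw [this]; exact inv_mem (Subgroup.mem_zpowers _)
      · exact Subgroup.mem_zpowers _
    have hL : mk L ∈ Subgroup.zpowers (of a) := by
      refine ih (mk L).norm ?_ _ rfl ?_
      · have h1 := norm_mk_le (L₁ := L)
        have h2 : x.norm = L.length + 1 := by simp [FreeGroup.norm, hw]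
        omega
      · have h3 : Commute (mk [(a, b)]) (of a) := by
          obtain ⟨k, hk⟩ := hab
          rw [← hk]; exact (Commute.refl _).zpow_left _
        have h4 : mk L = (mk [(a, b)])⁻¹ * x := by rw [hx']; group
        rw [h4]; exact h3.inv_left.mul_left hc
    rw [hx']; exact mul_mem hab hL
  · exfalso
    -- `of s * x` is reduced as written, so `x * of s` has full length too; compare first letters
    have hr : FreeGroup.IsReduced x.toWord := isReduced_toWord
    have h1 : (of s * x).toWord = (s, true) :: (a, b) :: L := by
      rw [toWord_mul, toWord_of, hw, List.singleton_append]
      apply FreeGroup.IsReduced.reduce_eq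
      rw [hw] at hr
      unfold FreeGroup.IsReduced at *
      rw [List.isChain_cons_cons]
      exact ⟨fun h => absurd h.symm ha, hr⟩
    have h2 : (x * of s).toWord.Sublist (x.toWord ++ (of s).toWord) := toWord_mul_sublist _ _
    have h3 : (x * of s).toWord = x.toWord ++ (of s).toWord := by
      apply h2.eq_of_length
      rw [hc.eq, h1, hw]; simp
    rw [hc.eq, h1, hw] at h3
    simp at h3
    exact ha h3.1.1.symm

lemma mem_zpowers_of_commute {α : Type} {s : α} {x : FreeGroup α} (h : Commute x (of s)) :
    x ∈ Subgroup.zpowers (of s) := by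
  classical
  exact mem_zpowers_of_commute_of s _ x rfl h

/-- A free group with nontrivial center has at most one letter. -/
lemma subsingleton_of_center {α : Type} {z : FreeGroup α} (hz : z ≠ 1)
    (h : ∀ x, Commute z x) : Subsingleton α := by
  classical
  refine ⟨fun s t => ?_⟩
  by_contra hst
  obtain ⟨k, hk⟩ := mem_zpowers_of_commute (h (of s))
  obtain ⟨l, hl⟩ := mem_zpowers_of_commute (h (of t))
  apply hz
  have h1 := congrArg (fun x => Multiplicative.toAdd (expo s x)) (hk.trans hl.symm)
  simp only [map_zpow, expo_of_self, expo_of_ne (Ne.symm hst), toAdd_zpow, toAdd_ofAdd] at h1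
  have : k = 0 := by simpa using h1
  subst this
  simpa using hk.symm

/-- Centralizers of nontrivial elements of a free group are cyclic: such a centralizer is free by
Nielsen–Schreier and has nontrivial center. -/
lemma isCyclic_centralizer {α : Type} {a : FreeGroup α} (ha : a ≠ 1) :
    IsCyclic (Subgroup.centralizer ({a} : Set (FreeGroup α))) := by
  set C := Subgroup.centralizer ({a} : Set (FreeGroup α)) with hC
  let e : C ≃* FreeGroup (IsFreeGroup.Generators C) := IsFreeGroup.toFreeGroup C
  have haC : a ∈ C := by simp [hC, Subgroup.mem_centralizer_singleton_iff]
  have hs : Subsingleton (IsFreeGroup.Generators C) := by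
    apply subsingleton_of_center (z := e ⟨a, haC⟩)
    · intro h
      apply ha
      rw [map_eq_one_iff e e.injective] at h
      simpa using congrArg Subtype.val h
    · intro x
      obtain ⟨y, rfl⟩ := e.surjective x
      apply Commute.map
      apply Subtype.ext
      have := y.2
      exact (Subgroup.mem_centralizer_singleton_iff.1 this).symm
  have : IsCyclic (FreeGroup (IsFreeGroup.Generators C)) := by
    rcases isEmpty_or_nonempty (IsFreeGroup.Generators C) with h | h
    · infer_instance
    · have : Unique (IsFreeGroup.Generators C) := Classical.choice (nonempty_unique _)
      infer_instance
  exact isCyclic_of_surjective e.symm e.symm.surjective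

/-- Commutation is transitive on the nontrivial elements of a free group. -/
lemma commute_trans {α : Type} {a x y : FreeGroup α} (ha : a ≠ 1) (hx : Commute x a)
    (hy : Commute y a) : Commute x y := by
  have := isCyclic_centralizer ha
  obtain ⟨g, hg⟩ := this.exists_generator
  obtain ⟨k, hk⟩ := hg ⟨x, by rw [Subgroup.mem_centralizer_singleton_iff]; exact hx.eq⟩
  obtain ⟨l, hl⟩ := hg ⟨y, by rw [Subgroup.mem_centralizer_singleton_iff]; exact hy.eq⟩
  have hk' := congrArg Subtype.val hk
  have hl' := congrArg Subtype.val hl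
  simp at hk' hl'
  rw [← hk', ← hl']
  exact (Commute.refl _).zpow_zpow _ _

/-- Two commuting elements of a free group are powers of a common element. -/
lemma exists_common_root {α : Type} {x y : FreeGroup α} (h : Commute x y) :
    ∃ e, x ∈ Subgroup.zpowers e ∧ y ∈ Subgroup.zpowers e := by
  by_cases hx : x = 1
  · exact ⟨y, by simp [hx, one_mem], Subgroup.mem_zpowers _⟩
  have := isCyclic_centralizer hx
  obtain ⟨g, hg⟩ := this.exists_generator
  obtain ⟨k, hk⟩ := hg ⟨x, by rw [Subgroup.mem_centralizer_singleton_iff]⟩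
  obtain ⟨l, hl⟩ := hg ⟨y, by rw [Subgroup.mem_centralizer_singleton_iff]; exact h.symm.eq⟩
  have hk' := congrArg Subtype.val hk
  have hl' := congrArg Subtype.val hl
  simp at hk' hl'
  exact ⟨g, ⟨k, hk'⟩, ⟨l, hl'⟩⟩

lemma zpow_ne_one {α : Type} {x : FreeGroup α} (hx : x ≠ 1) {t : ℤ} (ht : t ≠ 0) : x ^ t ≠ 1 := by
  intro h
  exact hx (by simpa [ht] using h)

lemma commute_of_zpow {α : Type} {x y : FreeGroup α} {t : ℤ} (ht : t ≠ 0)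
    (h : Commute x (y ^ t)) : Commute x y := by
  by_cases hy : y = 1
  · rw [hy]; exact Commute.one_right x
  exact commute_trans (zpow_ne_one hy ht) h ((Commute.refl y).zpow_right t)

lemma commute_of_pow {α : Type} {x y : FreeGroup α} {t : ℕ} (ht : t ≠ 0)
    (h : Commute x (y ^ t)) : Commute x y :=
  commute_of_zpow (t := t) (by exact_mod_cast ht) (by simpa using h)

lemma mem_zpowers_of_commute_zpow {α : Type} {x : FreeGroup α} {s : α} {t : ℤ} (ht : t ≠ 0)
    (h : Commute x (of s ^ t)) : x ∈ Subgroup.zpowers (of s) :=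
  mem_zpowers_of_commute (commute_of_zpow ht h)

/-! ### Euler characteristics of finite-index subgroups of free groups -/

/-- Crossed homomorphisms from `FreeGroup α` to the functions on the coset space of `K`, with
values in the two-element group. -/
def Cocycle {α : Type} (K : Subgroup (FreeGroup α)) (M : Type) [CommGroup M] : Type :=
  {u : FreeGroup α → (FreeGroup α ⧸ K) → M // ∀ g h x, u (g * h) x = u g (h • x) * u h x}

section Schreier

variable {α : Type} (K : Subgroup (FreeGroup α)) (M : Type) [CommGroup M]

lemma Cocycle.one {K : Subgroup (FreeGroup α)} {M : Type} [CommGroup M] (u : Cocycle K M)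
    (x : FreeGroup α ⧸ K) : u.1 1 x = 1 := by
  have := u.2 1 1 x
  simpa using this

/-- The permutation of `(FreeGroup α ⧸ K) × M` by which the letter `a` acts, given the values of
a crossed homomorphism on letters. -/
def cocyclePerm (v : α → (FreeGroup α ⧸ K) → M) (a : α) :
    Equiv.Perm ((FreeGroup α ⧸ K) × M) where
  toFun p := (of a • p.1, v a p.1 * p.2)
  invFun p := ((of a)⁻¹ • p.1, (v a ((of a)⁻¹ • p.1))⁻¹ * p.2)
  left_inv p := by simp
  right_inv p := by simp

lemma lift_cocyclePerm (v : α → (FreeGroup α ⧸ K) → M) (g : FreeGroup α) :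
    ∀ (x : FreeGroup α ⧸ K) (m : M), FreeGroup.lift (cocyclePerm K M v) g (x, m) =
      (g • x, (FreeGroup.lift (cocyclePerm K M v) g (x, 1)).2 * m) := by
  induction g using FreeGroup.induction_on with
  | C1 => intro x m; simp
  | of a => intro x m; simp [cocyclePerm]
  | inv_of a _ =>
    intro x m
    simp [cocyclePerm, Equiv.Perm.inv_def, Equiv.symm]
  | mul g h hg hh =>
    intro x m
    simp only [map_mul, Equiv.Perm.mul_apply]
    rw [hh x m, hg, hh x 1, hg _ (_ * 1)]
    simp [mul_smul, mul_assoc]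

/-- A crossed homomorphism on a free group is determined by arbitrary values on the letters. -/
noncomputable def cocycleEquivLetters : Cocycle K M ≃ (α → (FreeGroup α ⧸ K) → M) :=
  Equiv.ofBijective (fun u a x => u.1 (of a) x) <| by
    constructor
    · intro u u' h
      apply Subtype.ext
      funext g
      induction g using FreeGroup.induction_on with
      | C1 => funext x; rw [u.one, u'.one]
      | of a => exact congrFun h a
      | inv_of a _ =>
        funext x
        have h1 := u.2 (of a) (of a)⁻¹ x
        have h2 := u'.2 (of a) (of a)⁻¹ x
        rw [mul_inv_cancel, u.one] at h1
        rw [mul_inv_cancel, u'.one] at h2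
        have h3 := congrFun (congrFun h a) ((of a)⁻¹ • x)
        simp only at h3
        rw [h3] at h1
        exact mul_left_cancel (h1.symm.trans h2)
      | mul g k hg hk =>
        funext x
        rw [u.2, u'.2, hg, hk]
    · intro v
      refine ⟨⟨fun g x => (FreeGroup.lift (cocyclePerm K M v) g (x, 1)).2, ?_⟩, ?_⟩
      · intro g h x
        simp only [map_mul, Equiv.Perm.mul_apply]
        rw [← mul_one ((FreeGroup.lift (cocyclePerm K M v) h) (x, 1)).2]
        rw [lift_cocyclePerm K M v h x 1, lift_cocyclePerm K M v g _ (_ * 1)]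
        simp
      · funext a x
        simp [cocyclePerm]

lemma out_mem (g : FreeGroup α) (x : FreeGroup α ⧸ K) :
    (g • x).out⁻¹ * g * x.out ∈ K := by
  rw [mul_assoc, ← QuotientGroup.eq]
  rw [QuotientGroup.out_eq', ← smul_eq_mul, MulAction.Quotient.coe_smul_out]

/-- Shapiro's lemma for the coset space, at the level of crossed homomorphisms: such a map is a
homomorphism on `K` together with a normalized function on cosets. -/
noncomputable def cocycleEquivHom : Cocycle K M × M ≃ (K →* M) × ((FreeGroup α ⧸ K) → M) where
  toFun p := (
    { toFun := fun k => p.1.1 k ((1 : FreeGroup α) : FreeGroup α ⧸ K)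
      map_one' := p.1.one _
      map_mul' := fun k l => by
        have hl : (l : FreeGroup α) • ((1 : FreeGroup α) : FreeGroup α ⧸ K) =
            ((1 : FreeGroup α) : FreeGroup α ⧸ K) := by
          rw [MulAction.Quotient.smul_coe, QuotientGroup.eq]; simp
        simp only [Subgroup.coe_mul]
        rw [p.1.2, hl] },
    fun x => p.1.1 x.out ((1 : FreeGroup α) : FreeGroup α ⧸ K) * p.2)
  invFun q := (
    ⟨fun g x => q.2 (g • x) * (q.2 x)⁻¹ * q.1 ⟨_, out_mem K g x⟩, fun g h x => by
      beta_reduce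
      have : (⟨_, out_mem K (g * h) x⟩ : K) =
          ⟨_, out_mem K g (h • x)⟩ * ⟨_, out_mem K h x⟩ := by
        apply Subtype.ext
        simp only [Subgroup.coe_mul, mul_smul]
        group
      rw [this, map_mul, mul_smul]
      generalize q.1 ⟨_, out_mem K g (h • x)⟩ = A
      generalize q.1 ⟨_, out_mem K h x⟩ = B
      generalize q.2 (g • h • x) = C
      generalize q.2 (h • x) = D
      calc C * (q.2 x)⁻¹ * (A * B) = C * (D⁻¹ * D) * (q.2 x)⁻¹ * (A * B) := by simp
        _ = _ := by ac_rfl⟩,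
    q.2 ((1 : FreeGroup α) : FreeGroup α ⧸ K) *
      (q.1 ⟨((1 : FreeGroup α) : FreeGroup α ⧸ K).out, by
        have := QuotientGroup.mk_out_eq_mul K (1 : FreeGroup α)
        obtain ⟨h, hh⟩ := this
        rw [hh]; simp⟩)⁻¹)
  left_inv p := by
    obtain ⟨⟨u, hu⟩, m⟩ := p
    have key : ∀ (x : FreeGroup α ⧸ K), x.out • ((1 : FreeGroup α) : FreeGroup α ⧸ K) = x := by
      intro x
      rw [MulAction.Quotient.smul_coe]; simp
    refine Prod.ext (Subtype.ext ?_) ?_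
    · funext g x
      have h1 := hu g x.out ((1 : FreeGroup α) : FreeGroup α ⧸ K)
      have h2 := hu (g • x).out ((g • x).out⁻¹ * g * x.out) ((1 : FreeGroup α) : FreeGroup α ⧸ K)
      have h3 : ((g • x).out⁻¹ * g * x.out) • ((1 : FreeGroup α) : FreeGroup α ⧸ K) =
          ((1 : FreeGroup α) : FreeGroup α ⧸ K) := by
        rw [mul_smul, key, mul_smul, inv_smul_eq_iff, key]
      rw [key] at h1
      rw [h3] at h2
      have h4 : (g • x).out * ((g • x).out⁻¹ * g * x.out) = g * x.out := by group
      rw [h4, h1] at h2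
      simp only [MonoidHom.coe_mk, OneHom.coe_mk]
      rw [mul_inv_rev, ← mul_assoc, mul_assoc (u (g • x).out _), mul_inv_cancel, mul_one,
        mul_right_comm, ← h2, mul_inv_cancel_right]
    · simp
  right_inv q := by
    obtain ⟨χ, t⟩ := q
    have key : ∀ (x : FreeGroup α ⧸ K), x.out • ((1 : FreeGroup α) : FreeGroup α ⧸ K) = x := by
      intro x
      rw [MulAction.Quotient.smul_coe]; simp
    have h1 : ((1 : FreeGroup α) : FreeGroup α ⧸ K).out ∈ K := by
      obtain ⟨h, hh⟩ := QuotientGroup.mk_out_eq_mul K (1 : FreeGroup α)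
      rw [hh]; simp
    refine Prod.ext (MonoidHom.ext ?_) ?_
    · intro k
      have hk : (k : FreeGroup α) • ((1 : FreeGroup α) : FreeGroup α ⧸ K) =
          ((1 : FreeGroup α) : FreeGroup α ⧸ K) := by
        rw [MulAction.Quotient.smul_coe, QuotientGroup.eq]; simp
      simp only [MonoidHom.coe_mk, OneHom.coe_mk, hk, mul_inv_cancel, one_mul]
      have : (⟨((1 : FreeGroup α) : FreeGroup α ⧸ K).out⁻¹ * k *
          ((1 : FreeGroup α) : FreeGroup α ⧸ K).out,
            mul_mem (mul_mem (inv_mem h1) k.2) h1⟩ : K) = ⟨_, h1⟩⁻¹ * k * ⟨_, h1⟩ := rfl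
      rw [this, map_mul, map_mul, map_inv]
      rw [mul_right_comm, inv_mul_cancel, one_mul]
    · funext x
      simp only [key]
      have : ∀ p, (⟨x.out⁻¹ * x.out * ((1 : FreeGroup α) : FreeGroup α ⧸ K).out, p⟩ : K) =
          ⟨_, h1⟩ := fun p => Subtype.ext (by simp)
      simp only [this]
      generalize χ ⟨_, h1⟩ = A
      generalize t ((1 : FreeGroup α) : FreeGroup α ⧸ K) = B
      calc t x * B⁻¹ * A * (B * A⁻¹) = t x * (B⁻¹ * B) * (A * A⁻¹) := by ac_rfl
        _ = t x := by simp

end Schreier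

/-- The Schreier index formula, phrased as a count of homomorphisms to the group of order two. -/
lemma card_hom {α : Type} [Fintype α] (K : Subgroup (FreeGroup α)) [K.FiniteIndex] :
    Nat.card (K →* Multiplicative (ZMod 2)) * 2 ^ K.index = 2 ^ (Fintype.card α * K.index) * 2 := by
  have h2 : Nat.card (Multiplicative (ZMod 2)) = 2 := by
    rw [Nat.card_eq_fintype_card]; rfl
  have e := ((cocycleEquivLetters K (Multiplicative (ZMod 2))).symm.prodCongr
    (Equiv.refl (Multiplicative (ZMod 2)))).trans (cocycleEquivHom K (Multiplicative (ZMod 2)))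
  have := Nat.card_congr e
  rw [Nat.card_prod, Nat.card_prod, Nat.card_fun, Nat.card_fun, h2, ← Subgroup.index,
    ← pow_mul, Nat.card_eq_fintype_card, mul_comm K.index] at this
  exact this.symm

/-- Isomorphic finite-index subgroups of two free groups have the same Euler characteristic. -/
lemma euler_char {α β : Type} [Fintype α] [Fintype β] (K : Subgroup (FreeGroup α))
    (L : Subgroup (FreeGroup β)) [K.FiniteIndex] [L.FiniteIndex] (e : K ≃* L) :
    Fintype.card α * K.index + L.index = Fintype.card β * L.index + K.index := by
  have h1 := card_hom K
  have h2 := card_hom L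
  have h3 : Nat.card (K →* Multiplicative (ZMod 2)) = Nat.card (L →* Multiplicative (ZMod 2)) :=
    Nat.card_congr
      { toFun := fun f => f.comp e.symm.toMonoidHom
        invFun := fun f => f.comp e.toMonoidHom
        left_inv := fun f => by ext; simp
        right_inv := fun f => by ext; simp }
  rw [h3] at h1
  have h4 : 2 ^ (Fintype.card α * K.index + L.index) * 2 =
      2 ^ (Fintype.card β * L.index + K.index) * 2 := by
    rw [pow_add, pow_add, mul_right_comm, ← h1, mul_right_comm _ _ 2, ← h2]
    ring
  exact Nat.pow_right_injective le_rfl (Nat.eq_of_mul_eq_mul_right two_pos h4)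

/-! ### Permutation actions on the letters of a free group -/

section Support

variable {Z : Type}

open Classical in
/-- The retraction of `FreeGroup Z` killing the letters outside `W`. An element is supported in
`W` when `keep W` fixes it. -/
noncomputable def keep (W : Set Z) : FreeGroup Z →* FreeGroup Z :=
  FreeGroup.lift fun z => if z ∈ W then of z else 1

lemma keep_of_mem {W : Set Z} {z : Z} (h : z ∈ W) : keep W (of z) = of z := by simp [keep, h]

lemma keep_of_notMem {W : Set Z} {z : Z} (h : z ∉ W) : keep W (of z) = 1 := by simp [keep, h]

lemma keep_keep (W V : Set Z) (f : FreeGroup Z) : keep W (keep V f) = keep (W ∩ V) f := by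
  have : (keep W).comp (keep V) = keep (W ∩ V) := by
    ext z
    by_cases hV : z ∈ V <;> by_cases hW : z ∈ W <;> simp [keep, hV, hW]
  exact DFunLike.congr_fun this f

lemma keep_mono {W V : Set Z} (h : W ⊆ V) {f : FreeGroup Z} (hf : keep W f = f) :
    keep V f = f := by
  rw [← hf, keep_keep, Set.inter_eq_self_of_subset_right h]

lemma exists_finite_support (f : FreeGroup Z) : ∃ S : Set Z, S.Finite ∧ keep S f = f := by
  induction f using FreeGroup.induction_on with
  | C1 => exact ⟨∅, Set.finite_empty, by simp⟩
  | of a => exact ⟨{a}, Set.finite_singleton a, keep_of_mem (Set.mem_singleton _)⟩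
  | inv_of a _ => exact ⟨{a}, Set.finite_singleton a, by rw [map_inv, keep_of_mem (Set.mem_singleton _)]⟩
  | mul g h hg hh =>
    obtain ⟨S, hS, hgS⟩ := hg
    obtain ⟨T, hT, hhT⟩ := hh
    refine ⟨S ∪ T, hS.union hT, ?_⟩
    rw [map_mul, keep_mono Set.subset_union_left hgS, keep_mono Set.subset_union_right hhT]

lemma keep_singleton (c : Z) (f : FreeGroup Z) : keep {c} f ∈ Subgroup.zpowers (of c) := by
  induction f using FreeGroup.induction_on with
  | C1 => simp [one_mem]
  | of a =>
    by_cases h : a = c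
    · subst h; rw [keep_of_mem (Set.mem_singleton _)]; exact Subgroup.mem_zpowers _
    · rw [keep_of_notMem (by simpa using h)]; exact one_mem _
  | inv_of a h => rw [map_inv]; exact inv_mem h
  | mul g h hg hh => rw [map_mul]; exact mul_mem hg hh

lemma keep_subset_singleton {W : Set Z} {c : Z} (hW : W ⊆ {c}) {f : FreeGroup Z}
    (hf : keep W f = f) : ∃ t : ℤ, f = of c ^ t := by
  have := keep_singleton c f
  rw [keep_mono hW hf] at this
  obtain ⟨t, ht⟩ := this
  exact ⟨t, ht.symm⟩

/-- Whatever commutes with a nontrivial element supported in `W` is supported in `W`. -/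
lemma keep_of_commute {W : Set Z} {f w : FreeGroup Z} (hw : w ≠ 1) (hk : keep W w = w)
    (h : Commute f w) : keep W f = f := by
  have h1 : Commute (keep W f) w := by
    have := h.map (keep W)
    rwa [hk] at this
  obtain ⟨e, ⟨k, hk'⟩, ⟨l, hl⟩⟩ := exists_common_root (h.inv_left.mul_left h1).symm
  simp only at hk' hl
  have h2 : keep W (f⁻¹ * keep W f) = 1 := by
    rw [map_mul, map_inv, keep_keep, Set.inter_self, inv_mul_cancel]
  have h3 : (keep W e) ^ l = 1 := by rw [← map_zpow, hl, h2]
  by_cases hl0 : l = 0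
  · subst hl0
    rw [zpow_zero] at hl
    exact (inv_mul_eq_one.1 hl.symm).symm
  · exfalso
    have h4 : keep W e = 1 := by
      by_contra h5
      exact zpow_ne_one h5 hl0 h3
    apply hw
    rw [← hk, ← hk', map_zpow, h4, one_zpow]

variable {P : Type} [Group P] [MulAction P Z]

variable (P Z) in
/-- A permutation action on letters, extended to the free group. -/
def act : P →* MulAut (FreeGroup Z) where
  toFun q := freeGroupCongr (MulAction.toPerm q)
  map_one' := by
    ext x
    have : (⇑(MulAction.toPerm (1 : P)) : Z → Z) = id := by ext; simp
    simp [this]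
  map_mul' q r := by
    ext x
    simp [map.comp]
    congr 1
    ext z
    simp [mul_smul]

@[simp] lemma act_of (q : P) (z : Z) : act Z P q (of z) = of (q • z) := by
  simp [act]

lemma act_keep (q : P) (W : Set Z) (f : FreeGroup Z) :
    act Z P q (keep W f) = keep {z | q⁻¹ • z ∈ W} (act Z P q f) := by
  have : (act Z P q).toMonoidHom.comp (keep W) =
      (keep {z | q⁻¹ • z ∈ W}).comp (act Z P q).toMonoidHom := by
    ext z
    by_cases h : z ∈ W <;> simp [keep, h]
  exact DFunLike.congr_fun this f

lemma act_eq_of_keep {q : P} {W : Set Z} (hq : ∀ z ∈ W, q • z = z) {f : FreeGroup Z}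
    (hf : keep W f = f) : act Z P q f = f := by
  have : (act Z P q).toMonoidHom.comp (keep W) = keep W := by
    ext z
    by_cases h : z ∈ W
    · simp [keep, h, hq z h]
    · simp [keep, h]
  have h2 := DFunLike.congr_fun this f
  simp only [MonoidHom.comp_apply, hf] at h2
  exact h2

/-- If finite orbits of `q` are trivial, then some positive power of `q` moves the non-fixed part
of a finite set off the set. -/
lemma exists_pow_move {q : P} (h2 : ∀ (n : ℕ) (y : Z), 0 < n → q ^ n • y = y → q • y = y)
    {S : Set Z} (hS : S.Finite) : ∃ n : ℕ, 0 < n ∧ ∀ y ∈ S, q ^ n • y ∈ S → q • y = y := by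
  have hfin : (⋃ y ∈ S, ⋃ z ∈ S, {n : ℕ | q ^ n • y = z ∧ q • y ≠ y}).Finite := by
    refine hS.biUnion fun y _ => hS.biUnion fun z _ => Set.Subsingleton.finite ?_
    have key : ∀ a b : ℕ, a < b → q ^ a • y = z → q ^ b • y = z → q • y = y := by
      intro a b hab ha hb
      apply h2 (b - a) y (by omega)
      have : q ^ a • (q ^ (b - a) • y) = q ^ a • y := by
        rw [← mul_smul, ← pow_add, Nat.add_sub_cancel' hab.le, hb, ha]
      exact smul_left_cancel _ this
    rintro a ⟨ha, hy⟩ b ⟨hb, -⟩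
    rcases lt_trichotomy a b with h | h | h
    · exact absurd (key a b h ha hb) hy
    · exact h
    · exact absurd (key b a h hb ha) hy
  obtain ⟨n, hn⟩ := (hfin.union (Set.finite_singleton 0)).exists_notMem
  refine ⟨n, ?_, ?_⟩
  · rcases Nat.eq_zero_or_pos n with h | h
    · simp [h] at hn
    · exact h
  · intro y hy hny
    by_contra hne
    apply hn
    left
    simp only [Set.mem_iUnion]
    exact ⟨y, hy, _, hny, rfl, hne⟩

/-- The letters fixed by `q`. -/
def fixLetters (Z : Type) [MulAction P Z] (q : P) : Set Z := {z | q • z = z}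

/-- If `q` preserves the conjugacy class of `f`, then `f` is conjugate to an element supported on
letters fixed by `q`: a high power of `q` moves the finite support of `f` off itself except at
fixed letters, and one compares `f` with its image by killing letters. -/
lemma exists_conj_fixed {q : P} (h2 : ∀ (n : ℕ) (y : Z), 0 < n → q ^ n • y = y → q • y = y)
    {f u : FreeGroup Z} (h : act Z P q f = u * f * u⁻¹) :
    ∃ v w, keep (fixLetters Z q) w = w ∧ f = v * w * v⁻¹ := by
  have hn : ∀ n : ℕ, ∃ u', act Z P (q ^ n) f = u' * f * u'⁻¹ := by
    intro n
    induction n with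
    | zero => exact ⟨1, by simp⟩
    | succ n ih =>
      obtain ⟨u', hu'⟩ := ih
      refine ⟨act Z P q u' * u, ?_⟩
      rw [pow_succ', map_mul, MulAut.mul_apply, hu', map_mul, map_mul, map_inv, h]
      group
  obtain ⟨S, hS, hf⟩ := exists_finite_support f
  obtain ⟨n, -, hmove⟩ := exists_pow_move h2 hS
  obtain ⟨u', hu'⟩ := hn n
  refine ⟨keep S u'⁻¹, keep S (act Z P (q ^ n) f), ?_, ?_⟩
  · have : act Z P (q ^ n) f = keep {z | (q ^ n)⁻¹ • z ∈ S} (act Z P (q ^ n) f) := by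
      rw [← act_keep, hf]
    rw [this, keep_keep, keep_keep, keep_keep, Set.inter_assoc]
    congr 2
    ext z
    simp only [Set.mem_inter_iff, Set.mem_ofPred_eq, and_iff_right_iff_imp, and_imp]
    intro hz hz'
    have h3 := hmove _ hz' (by simpa using hz)
    have h4 : q ^ n • ((q ^ n)⁻¹ • z) = (q ^ n)⁻¹ • z := by
      generalize (q ^ n)⁻¹ • z = y at h3
      clear * - h3
      induction n with
      | zero => simp
      | succ n ih => rw [pow_succ, mul_smul, h3, ih]
    rw [smul_inv_smul] at h4
    rw [← h4] at h3
    exact h3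
  · rw [hu']
    simp only [map_mul, map_inv, hf]
    group

/-- Twisted version of `act_eq_of_keep`: if conjugation by `f₀`, itself supported on letters
fixed by `q`, undoes the effect of `q` on `f`, then `f` is supported on letters fixed by `q`. -/
lemma keep_fixed_of_twisted {q : P}
    (h2 : ∀ (n : ℕ) (y : Z), 0 < n → q ^ n • y = y → q • y = y)
    {f f₀ : FreeGroup Z} (h0 : keep (fixLetters Z q) f₀ = f₀)
    (h : act Z P q f = f₀⁻¹ * f * f₀) : keep (fixLetters Z q) f = f := by
  have hq0 : act Z P q f₀ = f₀ := act_eq_of_keep (fun z hz => hz) h0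
  have hn : ∀ n : ℕ, act Z P (q ^ n) f = (f₀ ^ n)⁻¹ * f * f₀ ^ n := by
    intro n
    induction n with
    | zero => simp
    | succ n ih =>
      rw [pow_succ', map_mul, MulAut.mul_apply, ih, map_mul, map_mul, map_inv, map_pow, hq0, h]
      rw [pow_succ' f₀]
      group
  obtain ⟨S, hS, hf⟩ := exists_finite_support f
  obtain ⟨T, hT, hf0⟩ := exists_finite_support f₀
  replace hf := keep_mono (Set.subset_union_left (t := T)) hf
  replace hf0 := keep_mono (Set.subset_union_right (s := S)) hf0
  obtain ⟨n, -, hmove⟩ := exists_pow_move h2 (hS.union hT)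
  have hfixn : ∀ z : Z, q • z = z → q ^ n • z = z := by
    intro y h3
    clear * - h3
    induction n with
    | zero => simp
    | succ n ih => rw [pow_succ, mul_smul, h3, ih]
  set F := act Z P (q ^ n) f with hF
  have h5 : keep (S ∪ T) F = F := by
    rw [hF, hn]; simp only [map_mul, map_inv, map_pow, hf, hf0]
  have h6 : keep {z | (q ^ n)⁻¹ • z ∈ S ∪ T} F = F := by
    rw [hF, ← act_keep, hf]
  have h7 : keep (fixLetters Z q) F = F := by
    rw [← h6, ← h5, keep_keep, keep_keep, keep_keep, Set.inter_assoc]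
    congr 2
    ext z
    simp only [Set.mem_inter_iff, and_iff_right_iff_imp]
    rintro ⟨hz', hz⟩
    have h3 := hmove _ hz' (by simpa using hz)
    have h4 := hfixn _ h3
    rw [smul_inv_smul] at h4
    rw [← h4] at h3
    exact h3
  apply (act Z P (q ^ n)).injective
  rw [act_keep, ← hF]
  have h8 : {z : Z | (q ^ n)⁻¹ • z ∈ fixLetters Z q} = fixLetters Z q := by
    ext z
    simp only [Set.mem_ofPred_eq, fixLetters]
    constructor
    · intro h3
      have h4 := hfixn _ h3
      rw [smul_inv_smul] at h4
      rwa [← h4] at h3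
    · intro h3
      have h4 := hfixn _ h3
      have : (q ^ n)⁻¹ • z = z := inv_smul_eq_iff.2 h4.symm
      rw [this, h3]
  rw [h8, h7]

end Support

/-! ### Elements with nonabelian centralizer -/

section Special

variable {Z P : Type} [Group P] [MulAction P Z]

/-- The properties of a permutation action of `P` on letters used to compute centralizers in
`FreeGroup Z ⋊ P`: `P` is commutative-transitive, stabilizers are closed under roots and under
centralizers, the letter `c` is fixed by everything, and the other letters have commutative
stabilizers. -/
structure GoodAction (Z P : Type) [Group P] [MulAction P Z] (c : Z) : Prop where
  trans : ∀ q q' q'' : P, q ≠ 1 → Commute q' q → Commute q'' q → Commute q' q''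
  root : ∀ (q : P) (n : ℕ) (y : Z), 0 < n → q ^ n • y = y → q • y = y
  comm_fix : ∀ (q q' : P) (y : Z), q ≠ 1 → q • y = y → Commute q' q → q' • y = y
  fix_c : ∀ q : P, q • c = c
  fix_comm : ∀ (q r : P) (y : Z), y ≠ c → q • y = y → r • y = y → Commute q r

/-- An element with nonabelian centralizer. -/
def NC {G : Type*} [Group G] (g : G) : Prop :=
  ∃ x y : G, Commute x g ∧ Commute y g ∧ ¬ Commute x y

lemma commute_conj_iff {G : Type*} [Group G] (u x y : G) :
    Commute (u * x * u⁻¹) (u * y * u⁻¹) ↔ Commute x y := by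
  constructor
  · intro h
    have := h.map (MulAut.conj u⁻¹)
    simpa [MulAut.conj_apply, mul_assoc] using this
  · intro h
    have := h.map (MulAut.conj u)
    simpa [MulAut.conj_apply, mul_assoc] using this

lemma NC.conj {G : Type*} [Group G] {g : G} (h : NC g) (u : G) : NC (u * g * u⁻¹) := by
  obtain ⟨x, y, hx, hy, hxy⟩ := h
  exact ⟨u * x * u⁻¹, u * y * u⁻¹, (commute_conj_iff _ _ _).2 hx, (commute_conj_iff _ _ _).2 hy,
    fun h => hxy ((commute_conj_iff _ _ _).1 h)⟩

open SemidirectProduct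

/-- Conjugates of powers of `c` and of elements of `P` fixing a letter other than `c`. -/
def Special (c : Z) (g : FreeGroup Z ⋊[act Z P] P) : Prop :=
  (∃ (u : FreeGroup Z ⋊[act Z P] P) (t : ℤ), g = u * inl (of c ^ t) * u⁻¹) ∨
  (∃ (u : FreeGroup Z ⋊[act Z P] P) (q : P) (y : Z), y ≠ c ∧ q • y = y ∧ g = u * inr q * u⁻¹)

lemma Special.conj {c : Z} {g : FreeGroup Z ⋊[act Z P] P} (h : Special c g)
    (u : FreeGroup Z ⋊[act Z P] P) : Special c (u * g * u⁻¹) := by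
  rcases h with ⟨v, t, rfl⟩ | ⟨v, q, y, hy, hq, rfl⟩
  · exact Or.inl ⟨u * v, t, by group⟩
  · exact Or.inr ⟨u * v, q, y, hy, hq, by group⟩

lemma special_of_keep {c : Z} {W : Set Z} (hW : W ⊆ {c}) {f : FreeGroup Z} (hf : keep W f = f) :
    Special c (inl f : FreeGroup Z ⋊[act Z P] P) := by
  obtain ⟨t, rfl⟩ := keep_subset_singleton hW hf
  exact Or.inl ⟨1, t, by simp⟩

lemma commute_inl {x : FreeGroup Z ⋊[act Z P] P} {f : FreeGroup Z} (h : Commute x (inl f)) :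
    act Z P x.right f = x.left⁻¹ * f * x.left := by
  have := congrArg SemidirectProduct.left h.eq
  simp only [mul_left, left_inl, right_inl, map_one, MulAut.one_apply] at this
  rw [mul_assoc, ← this]; group

lemma eq_inl_of_right {x : FreeGroup Z ⋊[act Z P] P} (h : x.right = 1) : x = inl x.left := by
  ext <;> simp [h]

/-- The case of an element of the normal free factor. Something outside the free factor commutes
with it, so up to conjugation it is supported on the letters fixed by some `q' ≠ 1`. If these
letters were not cut down to `c` by a second element of the centralizer, then the centralizer would
act trivially on them and be abelian. -/
lemma special_inl {c : Z} (hG : GoodAction Z P c) {f : FreeGroup Z}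
    (h : NC (inl f : FreeGroup Z ⋊[act Z P] P)) :
    Special c (inl f : FreeGroup Z ⋊[act Z P] P) := by
  by_cases hf : f = 1
  · exact Or.inl ⟨1, 0, by simp [hf]⟩
  have hinl : ∀ f : FreeGroup Z, f ≠ 1 → NC (inl f : FreeGroup Z ⋊[act Z P] P) →
      ∃ x : FreeGroup Z ⋊[act Z P] P, Commute x (inl f) ∧ x.right ≠ 1 := by
    intro f hf h
    by_contra hno
    push Not at hno
    obtain ⟨x, y, hx, hy, hxy⟩ := h
    apply hxy
    rw [eq_inl_of_right (hno x hx), eq_inl_of_right (hno y hy)] at *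
    have key : ∀ a b : FreeGroup Z, Commute (inl a : FreeGroup Z ⋊[act Z P] P) (inl b) →
        Commute a b := by
      intro a b hab
      apply inl_injective (φ := act Z P)
      simpa using hab.eq
    exact (commute_trans hf (key _ _ hx) (key _ _ hy)).map inl
  obtain ⟨x, hx, hq'⟩ := hinl f hf h
  set q' := x.right with hq'def
  obtain ⟨v, w, hw, rfl⟩ := exists_conj_fixed (q := q') (fun n y => hG.root q' n y)
    (u := x.left⁻¹) (by rw [commute_inl hx]; group)
  have hconj : (inl (v * w * v⁻¹) : FreeGroup Z ⋊[act Z P] P) =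
      inl v * inl w * (inl v)⁻¹ := by simp
  rw [hconj] at h ⊢
  apply Special.conj
  replace h : NC (inl w : FreeGroup Z ⋊[act Z P] P) := by
    have := h.conj (inl v)⁻¹
    simpa [mul_assoc] using this
  have hw1 : w ≠ 1 := by rintro rfl; simp at hf
  by_cases hy0 : ∃ y0, y0 ≠ c ∧ q' • y0 = y0
  swap
  · push Not at hy0
    refine special_of_keep (W := fixLetters Z q') (fun z hz => ?_) hw
    by_contra hzc
    exact hy0 z hzc hz
  obtain ⟨y0, hy0c, hy0⟩ := hy0
  by_cases hall : ∀ x : FreeGroup Z ⋊[act Z P] P, Commute x (inl w) → x.right • y0 = y0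
  · exfalso
    have hfix : ∀ x : FreeGroup Z ⋊[act Z P] P, Commute x (inl w) →
        ∀ z ∈ fixLetters Z q', x.right • z = z := fun x hx z hz =>
      hG.comm_fix q' x.right z hq' hz (hG.fix_comm _ _ y0 hy0c (hall x hx) hy0)
    have hleft : ∀ x : FreeGroup Z ⋊[act Z P] P, Commute x (inl w) → Commute x.left w := by
      intro x hx
      have h1 := commute_inl hx
      rw [act_eq_of_keep (hfix x hx) hw] at h1
      have : x.left * w = w * x.left := by
        simpa [mul_assoc] using congrArg (x.left * ·) h1
      exact this
    obtain ⟨x, y, hx, hy, hxy⟩ := h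
    apply hxy
    have hkx := keep_of_commute hw1 hw (hleft x hx)
    have hky := keep_of_commute hw1 hw (hleft y hy)
    ext
    · rw [mul_left, mul_left, act_eq_of_keep (hfix x hx) hky, act_eq_of_keep (hfix y hy) hkx]
      exact (commute_trans hw1 (hleft x hx) (hleft y hy)).eq
    · exact (hG.fix_comm _ _ y0 hy0c (hall x hx) (hall y hy)).eq
  · push Not at hall
    obtain ⟨x, hx, hxy⟩ := hall
    obtain ⟨v', w', hw', hvw⟩ := exists_conj_fixed (q := x.right) (fun n y => hG.root _ n y)
      (u := x.left⁻¹) (by rw [commute_inl hx]; group)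
    have h2 : w = keep (fixLetters Z q') v' * keep (fixLetters Z q') w' *
        (keep (fixLetters Z q') v')⁻¹ := by
      rw [← map_inv, ← map_mul, ← map_mul, ← hvw, hw]
    have h3 : (inl w : FreeGroup Z ⋊[act Z P] P) = inl (keep (fixLetters Z q') v') *
        inl (keep (fixLetters Z q') w') * (inl (keep (fixLetters Z q') v'))⁻¹ := by
      rw [← map_inv, ← map_mul, ← map_mul, ← h2]
    rw [h3]
    apply Special.conj
    refine special_of_keep (W := fixLetters Z q' ∩ fixLetters Z x.right) ?_ ?_
    · rintro z ⟨hz, hz'⟩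
      by_contra hzc
      exact hxy (hG.comm_fix q' _ y0 hq' hy0 (hG.fix_comm _ _ z hzc hz' hz))
    · rw [keep_keep, Set.inter_eq_left.2 Set.inter_subset_left]
      conv_rhs => rw [← hw', keep_keep]

/-- In `FreeGroup Z ⋊ P` an element with nonabelian centralizer is conjugate to a power of `c` or
to an element of `P` fixing a letter other than `c`. -/
theorem special_of_NC {c : Z} (hG : GoodAction Z P c) {g : FreeGroup Z ⋊[act Z P] P}
    (h : NC g) : Special c g := by
  by_cases hq : g.right = 1
  · rw [eq_inl_of_right hq] at h ⊢
    exact special_inl hG h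
  have hright : ∀ {g x : FreeGroup Z ⋊[act Z P] P}, Commute x g → Commute x.right g.right :=
    fun h => congrArg SemidirectProduct.right h.eq
  by_cases hx : ∃ x : FreeGroup Z ⋊[act Z P] P, Commute x g ∧ x.right = 1 ∧ x.left ≠ 1
  swap
  · exfalso
    push Not at hx
    obtain ⟨x, y, hx', hy', hxy⟩ := h
    apply hxy
    have h1 := hx (x * y * x⁻¹ * y⁻¹)
      (((hx'.mul_left hy').mul_left hx'.inv_left).mul_left hy'.inv_left) (by
        have := hG.trans _ _ _ hq (hright hx') (hright hy')
        simp [this.eq])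
    have h2 : x * y * x⁻¹ * y⁻¹ = 1 := by
      ext
      · exact h1
      · have := hG.trans _ _ _ hq (hright hx') (hright hy')
        simp [this.eq]
    exact mul_inv_eq_iff_eq_mul.1 (mul_inv_eq_one.1 h2)
  obtain ⟨x, hx, hxr, hxl⟩ := hx
  have hx0 := hx
  rw [eq_inl_of_right hxr] at hx0
  obtain ⟨v, w, hw, hvw⟩ := exists_conj_fixed (q := g.right) (fun n y => hG.root _ n y)
      (u := g.left⁻¹) (f := x.left) (by rw [commute_inl hx0.symm]; group)
  set g1 : FreeGroup Z ⋊[act Z P] P := (inl v)⁻¹ * g * inl v with hg1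
  have hgg1 : g = inl v * g1 * (inl v)⁻¹ := by rw [hg1]; group
  have hg1r : g1.right = g.right := by simp [hg1]
  have hg1w : Commute g1 (inl w) := by
    have := (commute_conj_iff (inl v)⁻¹ _ _).2 hx0.symm
    rw [inv_inv, hvw] at this
    rwa [show (inl v)⁻¹ * inl (v * w * v⁻¹) * inl v = (inl w : FreeGroup Z ⋊[act Z P] P) by
      rw [← map_inv, ← map_mul, ← map_mul]; congr 1; group] at this
  rw [hgg1]
  apply Special.conj
  replace h : NC g1 := by
    have := h.conj (inl v)⁻¹
    rwa [inv_inv] at this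
  have hw1 : w ≠ 1 := by rintro rfl; simp at hvw; exact hxl hvw
  rw [← hg1r] at hw hq
  clear_value g1
  set q := g1.right with hqdef
  have hcomm0 : Commute g1.left w := by
    have h1 := commute_inl hg1w
    rw [act_eq_of_keep (fun z hz => hz) hw] at h1
    have : g1.left * w = w * g1.left := by
      simpa [mul_assoc] using congrArg (g1.left * ·) h1
    exact this
  have hk0 := keep_of_commute hw1 hw hcomm0
  have hfix : ∀ x : FreeGroup Z ⋊[act Z P] P, Commute x g1 →
        ∀ z ∈ fixLetters Z q, x.right • z = z := fun x hx z hz =>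
      hG.comm_fix q x.right z hq hz (hright hx)
  have hleft : ∀ x : FreeGroup Z ⋊[act Z P] P, Commute x g1 →
      g1.left * act Z P q x.left = x.left * g1.left := by
    intro x hx
    have h1 := congrArg SemidirectProduct.left hx.eq
    rw [mul_left, mul_left, act_eq_of_keep (hfix x hx) hk0] at h1
    exact h1.symm
  have hkeep : ∀ x : FreeGroup Z ⋊[act Z P] P, Commute x g1 →
      keep (fixLetters Z q) x.left = x.left := by
    intro x hx
    refine keep_fixed_of_twisted (fun n y => hG.root _ n y) hk0 ?_
    rw [mul_assoc, ← hleft x hx]; group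
  have hcl : ∀ x : FreeGroup Z ⋊[act Z P] P, Commute x g1 → Commute x.left g1.left := by
    intro x hx
    have := hleft x hx
    rw [act_eq_of_keep (fun z hz => hz) (hkeep x hx)] at this
    exact this.symm
  have hfin : ∀ x y : FreeGroup Z ⋊[act Z P] P, Commute x g1 → Commute y g1 →
      Commute x.left y.left → Commute x y := by
    intro x y hx hy hxy
    ext
    · rw [mul_left, mul_left, act_eq_of_keep (hfix x hx) (hkeep y hy),
        act_eq_of_keep (hfix y hy) (hkeep x hx), hxy.eq]
    · exact (hG.trans _ _ _ hq (hright hx) (hright hy)).eq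
  obtain ⟨x, y, hx, hy, hxy⟩ := h
  by_cases hf0 : g1.left = 1
  · by_cases hy0 : ∃ y0, y0 ≠ c ∧ q • y0 = y0
    · obtain ⟨y0, hy0c, hy0⟩ := hy0
      exact Or.inr ⟨1, q, y0, hy0c, hy0, by ext <;> simp [hf0, hqdef]⟩
    · exfalso
      push Not at hy0
      have hW : fixLetters Z q ⊆ {c} := by
        intro z hz
        by_contra hzc
        exact hy0 z hzc hz
      obtain ⟨s, hs⟩ := keep_subset_singleton hW (hkeep x hx)
      obtain ⟨t, ht⟩ := keep_subset_singleton hW (hkeep y hy)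
      apply hxy
      apply hfin x y hx hy
      rw [hs, ht]
      exact Commute.zpow_zpow_self _ _ _
  · exact absurd (hfin x y hx hy (commute_trans hf0 (hcl x hx) (hcl y hy))) hxy

end Special

/-! ### The group of the tree as a semidirect product -/

section Model

open SemidirectProduct

variable {J : Type} {d : J → ℕ}

/-- The letters of the normal free factor in the semidirect product description of the group of
the diameter `4` tree with pivots `J` and `d j` leaves at the pivot `j`: the center `c` of the tree
and, for each leaf at `j`, one conjugate for each coset of the cyclic group of the pivot `j` in the
free group on the pivots. -/
inductive Letter (J : Type) (d : J → ℕ) : Type where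
  | c : Letter J d
  | leaf : (j : J) → Fin (d j) → (FreeGroup J ⧸ Subgroup.zpowers (of j)) → Letter J d

instance : MulAction (FreeGroup J) (Letter J d) where
  smul q z := match z with
    | .c => .c
    | .leaf j x r => .leaf j x (q • r)
  one_smul z := by
    cases z with
    | c => rfl
    | leaf j x r => exact congrArg _ (one_smul _ r)
  mul_smul p q z := by
    cases z with
    | c => rfl
    | leaf j x r => exact congrArg _ (mul_smul p q r)

@[simp] lemma smul_c (q : FreeGroup J) : q • (Letter.c : Letter J d) = Letter.c := rfl

@[simp] lemma smul_leaf (q : FreeGroup J) (j : J) (x : Fin (d j))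
    (r : FreeGroup J ⧸ Subgroup.zpowers (of j)) :
    q • (Letter.leaf j x r : Letter J d) = Letter.leaf j x (q • r) := rfl

lemma smul_leaf_eq_iff {q y : FreeGroup J} {j : J} {x : Fin (d j)} :
    q • (Letter.leaf j x (y : FreeGroup J ⧸ Subgroup.zpowers (of j)) : Letter J d) =
      Letter.leaf j x y ↔ y⁻¹ * q * y ∈ Subgroup.zpowers (of j) := by
  rw [smul_leaf, Letter.leaf.injEq]
  simp only [heq_eq_eq, true_and]
  rw [eq_comm, MulAction.Quotient.smul_coe, QuotientGroup.eq, smul_eq_mul, mul_assoc]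

lemma goodAction : GoodAction (Letter J d) (FreeGroup J) Letter.c where
  trans q q' q'' h h1 h2 := commute_trans h h1 h2
  root q n y hn h := by
    cases y with
    | c => rfl
    | leaf j x r =>
      induction r using QuotientGroup.induction_on with
      | H y =>
        rw [smul_leaf_eq_iff] at h ⊢
        have h1 : y⁻¹ * q ^ n * y = (y⁻¹ * q * y) ^ n := by
          have := conj_pow (i := n) (a := y⁻¹) (b := q)
          rw [inv_inv] at this
          exact this.symm
        rw [h1] at h
        obtain ⟨t, ht⟩ := h
        have h2 : Commute (of j) ((y⁻¹ * q * y) ^ n) := by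
          rw [← ht]; exact (Commute.refl _).zpow_right t
        exact mem_zpowers_of_commute (commute_of_pow hn.ne' h2).symm
  comm_fix q q' y hq h hc := by
    cases y with
    | c => rfl
    | leaf j x r =>
      induction r using QuotientGroup.induction_on with
      | H y =>
        rw [smul_leaf_eq_iff] at h ⊢
        obtain ⟨t, ht⟩ := h
        simp only at ht
        have h2 : Commute (y⁻¹ * q' * y) (of j ^ t) := by
          rw [ht]
          simpa using (commute_conj_iff y⁻¹ q' q).2 hc
        refine mem_zpowers_of_commute_zpow (t := t) ?_ h2
        rintro rfl
        rw [zpow_zero] at ht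
        apply hq
        have : q = y * (y⁻¹ * q * y) * y⁻¹ := by group
        rw [this, ← ht]; group
  fix_c q := rfl
  fix_comm q q' y hy h h' := by
    cases y with
    | c => exact absurd rfl hy
    | leaf j x r =>
      induction r using QuotientGroup.induction_on with
      | H y =>
        rw [smul_leaf_eq_iff] at h h'
        obtain ⟨t, ht⟩ := h
        obtain ⟨s, hs⟩ := h'
        simp only at ht hs
        have h2 : Commute (y⁻¹ * q * y) (y⁻¹ * q' * y) := by
          rw [← ht, ← hs]; exact Commute.zpow_zpow_self _ _ _
        have := commute_conj_iff y⁻¹ q q'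
        rw [inv_inv] at this
        exact this.1 h2

/-- The right-angled Artin group of the diameter `4` tree with pivots `J` and `d j` leaves at the
pivot `j`, as a semidirect product: the kernel of killing the center and the leaves is free. -/
abbrev Model (J : Type) (d : J → ℕ) : Type :=
  FreeGroup (Letter J d) ⋊[act (Letter J d) (FreeGroup J)] FreeGroup J

section Iso

variable {l : ℕ} {n k : Fin l → ℕ}

/-- The images in the model of the vertices of the tree. -/
def vertexImage : T4V l n k 0 → Model (Σ i, Fin (k i)) (fun p => n p.1)
  | .center => inl (of .c)
  | .hair x => x.elim0
  | .pivot i j => inr (of ⟨i, j⟩)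
  | .leaf i j x => inl (of (.leaf ⟨i, j⟩ x (1 : FreeGroup (Σ i, Fin (k i)))))

lemma commute_inl_inr {f : FreeGroup (Letter J d)} {q : FreeGroup J}
    (h : act (Letter J d) (FreeGroup J) q f = f) :
    Commute (inl f : Model J d) (inr q) := by
  ext <;> simp [h]

lemma of_fix_leaf (j : J) (x : Fin (d j)) :
    of j • (Letter.leaf j x (1 : FreeGroup J) : Letter J d) =
      Letter.leaf j x (1 : FreeGroup J) := by
  rw [smul_leaf_eq_iff]; simp

lemma vertexImage_commute {u v : T4V l n k 0} (h : t4Adj u v) :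
    Commute (vertexImage u) (vertexImage v) := by
  cases u <;> cases v <;> simp only [t4Adj] at h
  · rename_i x
    exact x.elim0
  · exact commute_inl_inr (by simp)
  · rename_i i j i' j' x
    simp only [Sigma.mk.injEq] at h
    obtain ⟨rfl, h⟩ := h
    rw [heq_eq_eq] at h
    subst h
    refine (commute_inl_inr ?_).symm
    rw [act_of, of_fix_leaf]

/-- The homomorphism from the right-angled Artin group of the tree to the model. -/
def toModel : RAAG (t4Graph l n k 0) →* Model (Σ i, Fin (k i)) (fun p => n p.1) :=
  PresentedGroup.toGroup (f := vertexImage) <| by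
    rintro r ⟨u, v, huv, rfl⟩
    have : Commute (vertexImage u) (vertexImage v) := by
      rcases huv.2 with h | h
      · exact vertexImage_commute h
      · exact (vertexImage_commute h).symm
    simp [this.eq]

/-- A vertex of the tree as an element of the group. -/
abbrev vert (v : T4V l n k 0) : RAAG (t4Graph l n k 0) := PresentedGroup.of v

lemma vert_commute {u v : T4V l n k 0} (h : t4Adj u v) : Commute (vert u) (vert v) := by
  have huv : (t4Graph l n k 0).Adj u v := by
    refine ⟨?_, Or.inl h⟩
    rintro rfl
    cases u <;> simp [t4Adj] at h
  have := PresentedGroup.one_of_mem (rels := raagRels (t4Graph l n k 0)) ⟨u, v, huv, rfl⟩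
  simp only [map_mul, map_inv] at this
  exact (mul_inv_eq_iff_eq_mul.1 (mul_inv_eq_one.1 this))

/-- The inclusion of the free group on the pivots. -/
def pivotHom : FreeGroup (Σ i, Fin (k i)) →* RAAG (t4Graph l n k 0) :=
  FreeGroup.lift fun p => vert (.pivot p.1 p.2)

/-- The image of a letter: `leaf p x (q⟨p⟩)` goes to the conjugate of the leaf by `q`. -/
noncomputable def letterImage :
    Letter (Σ i, Fin (k i)) (fun p => n p.1) → RAAG (t4Graph l n k 0)
  | .c => vert .center
  | .leaf p x r => pivotHom r.out * vert (.leaf p.1 p.2 x) * (pivotHom r.out)⁻¹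

lemma letterImage_leaf (p : Σ i, Fin (k i)) (x : Fin (n p.1)) (q : FreeGroup (Σ i, Fin (k i))) :
    letterImage (.leaf p x q) = pivotHom q * vert (.leaf p.1 p.2 x) * (pivotHom q)⁻¹ := by
  obtain ⟨⟨h, t, rfl⟩, hh⟩ := QuotientGroup.mk_out_eq_mul (Subgroup.zpowers (of p)) q
  simp only at hh
  have h1 : Commute (pivotHom (of p) ^ t) (vert (n := n) (.leaf p.1 p.2 x)) := by
    refine Commute.zpow_left ?_ t
    simp only [pivotHom, lift_apply_of]
    exact vert_commute rfl
  rw [letterImage, hh, map_mul, map_zpow, mul_assoc (pivotHom q), h1.eq]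
  group

/-- The homomorphism from the model to the right-angled Artin group of the tree. -/
noncomputable def ofModel : Model (Σ i, Fin (k i)) (fun p => n p.1) →* RAAG (t4Graph l n k 0) :=
  SemidirectProduct.lift (FreeGroup.lift letterImage) pivotHom <| by
    intro q
    ext z
    cases z with
    | c =>
      simp only [MonoidHom.comp_apply, MulEquiv.coe_toMonoidHom, act_of, smul_c,
        lift_apply_of, MulAut.conj_apply]
      rw [eq_mul_inv_iff_mul_eq]
      change Commute (vert .center) (pivotHom q)
      induction q using FreeGroup.induction_on with
      | C1 => simp
      | of p => simp only [pivotHom, lift_apply_of]; exact vert_commute trivial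
      | inv_of p h => rw [map_inv]; exact h.inv_right
      | mul a b ha hb => rw [map_mul]; exact ha.mul_right hb
    | leaf p x r =>
      induction r using QuotientGroup.induction_on with
      | H y =>
        simp only [MonoidHom.comp_apply, MulEquiv.coe_toMonoidHom, act_of, smul_leaf,
          lift_apply_of, MulAut.conj_apply, MulAction.Quotient.smul_coe, letterImage_leaf,
          smul_eq_mul, map_mul]
        group

/-- The right-angled Artin group of the tree is the model. -/
noncomputable def equivModel :
    RAAG (t4Graph l n k 0) ≃* Model (Σ i, Fin (k i)) (fun p => n p.1) :=
  MonoidHom.toMulEquiv toModel ofModel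
    (by
      ext v
      simp only [MonoidHom.comp_apply, MonoidHom.id_apply, toModel, PresentedGroup.toGroup.of]
      cases v with
      | center => simp [vertexImage, ofModel, letterImage]
      | hair x => exact x.elim0
      | pivot i j => simp [vertexImage, ofModel, pivotHom]
      | leaf i j x => simp [vertexImage, ofModel, letterImage_leaf])
    (by
      have hp : ∀ q, toModel (pivotHom (n := n) (k := k) q) = inr q := by
        intro q
        have : toModel.comp (pivotHom (n := n) (k := k)) = inr := by
          ext p <;> simp [pivotHom, toModel, vertexImage]
        exact DFunLike.congr_fun this q
      apply SemidirectProduct.hom_ext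
      · ext z : 1
        cases z with
        | c => simp [ofModel, letterImage, toModel, vertexImage]
        | leaf p x r =>
          induction r using QuotientGroup.induction_on with
          | H y =>
            simp only [MonoidHom.comp_apply, MonoidHom.id_apply, ofModel, lift_inl, lift_apply_of,
              letterImage_leaf, map_mul, map_inv, hp]
            simp only [toModel, PresentedGroup.toGroup.of]
            have : y • (Letter.leaf p x (1 : FreeGroup (Σ i, Fin (k i))) :
                Letter (Σ i, Fin (k i)) (fun p => n p.1)) = Letter.leaf p x y := by
              rw [smul_leaf, MulAction.Quotient.smul_coe, smul_eq_mul, mul_one]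
            rw [← this, ← act_of, inl_aut, map_inv]
            rfl
      · ext q : 1
        simp [ofModel, hp])

end Iso

end Model

/-! ### Non-leaf vertices and their centralizers -/

section Data

open SemidirectProduct

/-- The features of the right-angled Artin group of a diameter `4` tree used below. `V` is the set
of non-leaf vertices, with canonical generators `a v`. The centralizer of `a v` is the product of
`⟨a v⟩` and of the image of the injection `ι v`, with retraction `π v`, of the free group on the
neighbours `B v` of `v`; the neighbours in `per v` are themselves in `V`, via `nb v`. `e v` is the
exponent sum of `a v`, and `cen` tells the center from the pivots. -/
structure TreeData (G : Type) [Group G] where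
  V : Type
  [fintypeV : Fintype V]
  [decV : DecidableEq V]
  B : V → Type
  [fintypeB : ∀ v, Fintype (B v)]
  [nontrivialB : ∀ v, Nontrivial (B v)]
  a : V → G
  ι : ∀ v, FreeGroup (B v) →* G
  π : ∀ v, G →* FreeGroup (B v)
  e : V → G →* Multiplicative ℤ
  per : ∀ v, Finset (B v)
  nb : ∀ v, B v → V
  center : V
  cen : V → Bool
  π_ι : ∀ v x, π v (ι v x) = x
  π_a : ∀ v, π v (a v) = 1
  a_comm : ∀ v x, Commute (a v) (ι v x)
  cent : ∀ v (b : ℤ) g, b ≠ 0 → Commute g (a v ^ b) → ∃ s : ℤ, g = a v ^ s * ι v (π v g)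
  e_self : ∀ v, e v (a v) = Multiplicative.ofAdd 1
  e_ne : ∀ v w, w ≠ v → e v (a w) = 1
  ι_nb : ∀ v, ∀ s ∈ per v, ι v (of s) = a (nb v s)
  adj : ∀ v w, v = w ∨ π w (a v) = 1 ∨
    ((∃ s ∈ per v, nb v s = w) ∧ (∃ s ∈ per w, nb w s = v))
  cen_nb : ∀ v, ∀ s ∈ per v, cen (nb v s) = !cen v
  per_nonempty : ∀ v, (per v).Nonempty
  center_nb : ∀ v, v = center ∨ ∃ s, per v = {s} ∧ nb v s = center
  nc : ∀ g : G, NC g → ∃ (v : V) (t : ℤ) (u : G), g = u * a v ^ t * u⁻¹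
  gen : Subgroup.closure {g : G | ∃ v, Commute g (a v)} = ⊤

attribute [instance] TreeData.fintypeV TreeData.decV TreeData.fintypeB TreeData.nontrivialB

variable {J : Type} {d : J → ℕ}

/-- Neighbours of a non-leaf vertex: those of the center `none` are the pivots, those of the pivot
`some j` are the center `none` and the leaves at `j`. -/
def Nbr (d : J → ℕ) : Option J → Type
  | none => J
  | some j => Option (Fin (d j))

instance [Fintype J] : ∀ v, Fintype (Nbr d v)
  | none => inferInstanceAs (Fintype J)
  | some j => inferInstanceAs (Fintype (Option (Fin (d j))))

/-- The canonical generators of the non-leaf vertices. -/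
def vertexGen : Option J → Model J d
  | none => inl (of .c)
  | some j => inr (of j)

/-- The letter of a neighbour of a pivot. -/
def nbrLetter (j : J) : Option (Fin (d j)) → Letter J d
  | none => .c
  | some x => .leaf j x (1 : FreeGroup J)

/-- The inclusion of the free group on the neighbours of a vertex. -/
def nbrIncl : ∀ v : Option J, FreeGroup (Nbr d v) →* Model J d
  | none => inr
  | some j => (inl : _ →* Model J d).comp (FreeGroup.map (nbrLetter j))

/-- The neighbour of `j` to which a letter is retracted, if any. -/
def letterNbr [DecidableEq J] (j : J) : Letter J d → FreeGroup (Option (Fin (d j)))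
  | .c => of none
  | .leaf j' x _ => if h : j' = j then of (some (h ▸ x)) else 1

lemma lift_act {X : Type} [Group X] {f : Letter J d → X}
    (hf : ∀ (q : FreeGroup J) z, f (q • z) = f z) (q : FreeGroup J) :
    (FreeGroup.lift f).comp (act (Letter J d) (FreeGroup J) q).toMonoidHom =
      (MulAut.conj ((1 : FreeGroup J →* X) q)).toMonoidHom.comp (FreeGroup.lift f) := by
  ext z
  simp [hf]

/-- The retraction onto the free group on the neighbours of a pivot. -/
def pivotRetr [DecidableEq J] (j : J) : Model J d →* FreeGroup (Option (Fin (d j))) :=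
  SemidirectProduct.lift (FreeGroup.lift (letterNbr j)) 1 <| lift_act <| by
    rintro q (_ | _) <;> rfl

lemma pivotRetr_apply [DecidableEq J] (j : J) (g : Model J d) :
    pivotRetr j g = FreeGroup.lift (letterNbr j) g.left := by
  conv_lhs => rw [← inl_left_mul_inr_right g]
  rw [pivotRetr, map_mul, lift_inl, lift_inr, MonoidHom.one_apply, mul_one]

lemma pivotRetr_inr [DecidableEq J] (j : J) (q : FreeGroup J) :
    pivotRetr j (inr q : Model J d) = 1 := by
  rw [pivotRetr_apply, left_inr, map_one]

/-- The retraction onto the free group on the neighbours of a vertex. -/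
def nbrRetr [DecidableEq J] : ∀ v : Option J, Model J d →* FreeGroup (Nbr d v)
  | none => rightHom
  | some j => pivotRetr j

/-- The exponent of the letter `c`. -/
def letterExp : Letter J d → Multiplicative ℤ
  | .c => Multiplicative.ofAdd 1
  | .leaf _ _ _ => 1

/-- The exponent sums of the non-leaf vertices. -/
noncomputable def vertexExp [DecidableEq J] : Option J → Model J d →* Multiplicative ℤ
  | none => SemidirectProduct.lift (FreeGroup.lift letterExp) 1 <| lift_act <| by
      rintro q (_ | _) <;> rfl
  | some j => (expo j).comp rightHom

lemma nbr_keep [DecidableEq J] (j : J) {W : Set (Letter J d)}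
    (hW : ∀ z ∈ W, ∃ x, z = nbrLetter j x) {f : FreeGroup (Letter J d)} (hf : keep W f = f) :
    FreeGroup.map (nbrLetter j) (FreeGroup.lift (letterNbr j) f) = f := by
  have : ((FreeGroup.map (nbrLetter j)).comp (FreeGroup.lift (letterNbr j))).comp (keep W) =
      keep W := by
    ext z
    by_cases hz : z ∈ W
    · obtain ⟨x, rfl⟩ := hW z hz
      rw [MonoidHom.comp_apply, keep_of_mem hz]
      cases x <;> simp [nbrLetter, letterNbr]
    · rw [MonoidHom.comp_apply, keep_of_notMem hz, map_one]
  have h2 := DFunLike.congr_fun this f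
  rw [MonoidHom.comp_apply, hf] at h2
  exact h2

lemma letterNbr_nbrLetter [DecidableEq J] (j : J) (x : FreeGroup (Option (Fin (d j)))) :
    FreeGroup.lift (letterNbr j) (FreeGroup.map (nbrLetter j) x) = x := by
  have : (FreeGroup.lift (letterNbr j)).comp (FreeGroup.map (nbrLetter (d := d) j)) =
      MonoidHom.id _ := by
    ext x
    cases x <;> simp [nbrLetter, letterNbr]
  exact DFunLike.congr_fun this x

lemma pivot_comm (j : J) (x : FreeGroup (Option (Fin (d j)))) :
    Commute (inr (of j) : Model J d) (inl (FreeGroup.map (nbrLetter j) x)) := by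
  refine (commute_inl_inr ?_).symm
  refine act_eq_of_keep (W := Set.range (nbrLetter j)) ?_ ?_
  · rintro _ ⟨_ | x, rfl⟩
    · rfl
    · exact of_fix_leaf j x
  · have : (keep (Set.range (nbrLetter (d := d) j))).comp (FreeGroup.map (nbrLetter j)) =
        FreeGroup.map (nbrLetter j) := by
      ext x; simp [keep]
    exact DFunLike.congr_fun this x

lemma center_cent {b : ℤ} {g : Model J d} (hb : b ≠ 0)
    (h : Commute g ((inl (of .c) : Model J d) ^ b)) :
    ∃ s : ℤ, g = (inl (of .c) : Model J d) ^ s * inr g.right := by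
  rw [← map_zpow] at h
  have h1 := commute_inl h
  rw [map_zpow, act_of, smul_c] at h1
  have h2 : Commute g.left (of .c ^ b) := by
    have : g.left * of .c ^ b = of .c ^ b * g.left := by
      simpa [mul_assoc] using congrArg (g.left * ·) h1
    exact this
  obtain ⟨s, hs⟩ := mem_zpowers_of_commute_zpow hb h2
  refine ⟨s, ?_⟩
  rw [← map_zpow, show of Letter.c ^ s = g.left from hs, inl_left_mul_inr_right]

/-- The letters fixed by a power of the pivot `j` are its neighbours. -/
lemma fixLetters_pivot [DecidableEq J] {j : J} {b : ℤ} (hb : b ≠ 0) :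
    ∀ z ∈ fixLetters (Letter J d) (of j ^ b), ∃ x, z = nbrLetter j x := by
  intro z hz
  cases z with
  | c => exact ⟨none, rfl⟩
  | leaf j' x r =>
    induction r using QuotientGroup.induction_on with
    | H y =>
      change _ • _ = _ at hz
      rw [smul_leaf_eq_iff] at hz
      obtain ⟨t, ht⟩ := hz
      simp only at ht
      have h1 := congrArg (expo j) ht
      simp only [map_mul, map_inv, map_zpow, expo_of_self] at h1
      rw [mul_comm, mul_inv_cancel_left] at h1
      by_cases hj : j' = j
      swap
      · rw [expo_of_ne hj, one_zpow] at h1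
        exact absurd (congrArg Multiplicative.toAdd h1) (by simpa using hb.symm)
      subst hj
      rw [expo_of_self] at h1
      have h2 : t = b := by simpa using congrArg Multiplicative.toAdd h1
      subst h2
      have h3 : Commute y (of j' ^ t) := by
        have : y * of j' ^ t = of j' ^ t * y := by
          nth_rewrite 1 [ht]; group
        exact this
      have h4 := mem_zpowers_of_commute_zpow hb h3
      refine ⟨some x, ?_⟩
      rw [nbrLetter, Letter.leaf.injEq]
      simp only [heq_eq_eq, true_and]
      rw [QuotientGroup.eq]
      simpa using h4

lemma pivot_cent [DecidableEq J] {j : J} {b : ℤ} {g : Model J d} (hb : b ≠ 0)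
    (h : Commute g ((inr (of j) : Model J d) ^ b)) :
    ∃ s : ℤ, g = (inr (of j) : Model J d) ^ s *
      inl (FreeGroup.map (nbrLetter j) (FreeGroup.lift (letterNbr j) g.left)) := by
  rw [← map_zpow] at h
  have hr : Commute g.right (of j ^ b) := congrArg SemidirectProduct.right h.eq
  have hl : act _ _ (of j ^ b) g.left = g.left := by
    have := congrArg SemidirectProduct.left h.eq
    rw [mul_left, mul_left, left_inr, right_inr, map_one, mul_one, one_mul] at this
    exact this.symm
  have hk : keep (fixLetters _ (of j ^ b)) g.left = g.left :=
    keep_fixed_of_twisted (f₀ := 1) (fun n y => goodAction.root _ n y) (map_one _)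
      (by simpa using hl)
  have h3 := nbr_keep j (fixLetters_pivot hb) hk
  obtain ⟨s, hs⟩ := mem_zpowers_of_commute_zpow hb hr
  refine ⟨s, ?_⟩
  rw [((pivot_comm j _).zpow_left s).eq, h3, ← map_zpow, show of j ^ s = g.right from hs,
    inl_left_mul_inr_right]

lemma model_gen :
    Subgroup.closure {g : Model J d | ∃ v, Commute g (vertexGen v)} = ⊤ := by
  rw [eq_top_iff]
  intro g _
  set C := Subgroup.closure {g : Model J d | ∃ v, Commute g (vertexGen v)}
  have hr : ∀ q : FreeGroup J, (inr q : Model J d) ∈ C := fun q =>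
    Subgroup.subset_closure ⟨none, (commute_inl_inr (by simp)).symm⟩
  have hl : ∀ f : FreeGroup (Letter J d), (inl f : Model J d) ∈ C := by
    intro f
    induction f using FreeGroup.induction_on with
    | C1 => rw [map_one]; exact one_mem _
    | of z =>
      cases z with
      | c => exact Subgroup.subset_closure ⟨none, Commute.refl _⟩
      | leaf j x r =>
        induction r using QuotientGroup.induction_on with
        | H y =>
          have : y • (Letter.leaf j x (1 : FreeGroup J) : Letter J d) = Letter.leaf j x y := by
            rw [smul_leaf, MulAction.Quotient.smul_coe, smul_eq_mul, mul_one]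
          rw [← this, ← act_of, inl_aut]
          refine mul_mem (mul_mem (hr _) (Subgroup.subset_closure ⟨some j, ?_⟩)) (hr _)
          have := pivot_comm (d := d) j (of (some x))
          rw [FreeGroup.map.of] at this
          exact this.symm
    | inv_of z h => rw [map_inv]; exact inv_mem h
    | mul a b ha hb => rw [map_mul]; exact mul_mem ha hb
  rw [← inl_left_mul_inr_right g]
  exact mul_mem (hl _) (hr _)

/-- The data of the right-angled Artin group of a diameter `4` tree. -/
noncomputable def modelData [Fintype J] [DecidableEq J] [Nontrivial J] (hd : ∀ j, 0 < d j) :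
    TreeData (Model J d) where
  V := Option J
  B := Nbr d
  nontrivialB
    | none => inferInstanceAs (Nontrivial J)
    | some j => by
      have := hd j
      exact ⟨⟨none, some ⟨0, this⟩, fun h => Option.some_ne_none _ h.symm⟩⟩
  a := vertexGen
  ι := nbrIncl
  π := nbrRetr
  e := vertexExp
  per
    | none => (Finset.univ : Finset J)
    | some j => ({none} : Finset (Option (Fin (d j))))
  nb
    | none => fun j => some j
    | some _ => fun _ => none
  center := none
  cen v := v.isNone
  π_ι v x := by
    cases v with
    | none => rfl
    | some j =>
      exact (pivotRetr_apply j _).trans <|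
        letterNbr_nbrLetter j x
  π_a v := by
    cases v with
    | none => exact rightHom_inl _
    | some j => exact pivotRetr_inr j _
  a_comm v x := by
    cases v with
    | none => exact commute_inl_inr (act_of (P := FreeGroup J) x (Letter.c : Letter J d))
    | some j => exact pivot_comm j x
  cent v b g hb h := by
    cases v with
    | none => exact center_cent hb h
    | some j =>
      obtain ⟨s, hs⟩ := pivot_cent hb h
      refine ⟨s, ?_⟩
      have : nbrRetr (some j) g = FreeGroup.lift (letterNbr j) g.left := pivotRetr_apply j g
      rw [this]
      exact hs
  e_self v := by
    cases v with
    | none => simp [vertexExp, vertexGen, letterExp]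
    | some j => simp [vertexExp, vertexGen, expo_of_self]
  e_ne v w hvw := by
    cases v <;> cases w
    · exact absurd rfl hvw
    · simp [vertexExp, vertexGen]
    · simp [vertexExp, vertexGen]
    · simp only [vertexExp, vertexGen, MonoidHom.comp_apply, rightHom_inr]
      exact expo_of_ne (fun h => hvw (by rw [h]))
  ι_nb v s hs := by
    cases v with
    | none => rfl
    | some j =>
      obtain rfl : s = none := Finset.mem_singleton.1 hs
      change inl (FreeGroup.map (nbrLetter j) (of none)) = _
      rw [FreeGroup.map.of]
      rfl
  adj v w := by
    cases v <;> cases w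
    · exact Or.inl rfl
    · exact Or.inr (Or.inr ⟨⟨_, Finset.mem_univ _, rfl⟩, ⟨none, Finset.mem_singleton_self (none : Option (Fin (d _))), rfl⟩⟩)
    · exact Or.inr (Or.inr ⟨⟨none, Finset.mem_singleton_self (none : Option (Fin (d _))), rfl⟩, ⟨_, Finset.mem_univ _, rfl⟩⟩)
    · exact Or.inr (Or.inl (pivotRetr_inr _ _))
  cen_nb v s hs := by
    cases v <;> rfl
  per_nonempty v := by
    cases v with
    | none => exact (Finset.univ_nonempty : (Finset.univ : Finset J).Nonempty)
    | some j => exact Finset.singleton_nonempty _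
  center_nb v := by
    cases v with
    | none => exact Or.inl rfl
    | some j => exact Or.inr ⟨none, rfl, rfl⟩
  nc g h := by
    rcases special_of_NC goodAction h with ⟨u, t, rfl⟩ | ⟨u, q, y, hy, hq, rfl⟩
    · exact ⟨none, t, u, by simp [vertexGen]⟩
    · cases y with
      | c => exact absurd rfl hy
      | leaf j x r =>
        induction r using QuotientGroup.induction_on with
        | H y =>
          rw [smul_leaf_eq_iff] at hq
          obtain ⟨t, ht⟩ := hq
          simp only at ht
          refine ⟨some j, t, u * inr y, ?_⟩
          have : q = y * of j ^ t * y⁻¹ := by rw [ht]; group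
          simp only [this, vertexGen, map_mul, map_inv, map_zpow]
          group
  gen := model_gen

end Data

/-! ### Counting translation lengths -/

section Count

/-- Conjugate nontrivial powers of letters agree. -/
lemma conj_letter_inj {α : Type} {s s' : α} {z z' : FreeGroup α} {t t' : ℤ} (ht : t ≠ 0)
    (h : z⁻¹ * of s ^ t * z = z'⁻¹ * of s' ^ t' * z') :
    s = s' ∧ t = t' ∧ ∃ k : ℤ, z = of s ^ k * z' := by
  classical
  have h1 := congrArg (expo s) h
  simp only [map_mul, map_inv, map_zpow, expo_of_self] at h1
  rw [mul_comm, mul_inv_cancel_left, mul_comm _ (expo s z'), mul_inv_cancel_left] at h1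
  have hs : s' = s := by
    by_contra hne
    rw [expo_of_ne hne, one_zpow] at h1
    exact ht (by simpa using congrArg Multiplicative.toAdd h1)
  subst hs
  rw [expo_of_self] at h1
  obtain rfl : t = t' := by simpa using congrArg Multiplicative.toAdd h1
  refine ⟨rfl, rfl, ?_⟩
  have h3 : Commute (z * z'⁻¹) (of s' ^ t) := by
    have : (z * z'⁻¹) * of s' ^ t = of s' ^ t * (z * z'⁻¹) := by
      have := congrArg (fun w => z * w * z'⁻¹) h
      calc _ = z * (z'⁻¹ * of s' ^ t * z') * z'⁻¹ := by group
        _ = z * (z⁻¹ * of s' ^ t * z) * z'⁻¹ := this.symm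
        _ = _ := by group
    exact this
  obtain ⟨k, hk⟩ := mem_zpowers_of_commute_zpow ht h3
  exact ⟨k, by simp only at hk; rw [hk]; group⟩

lemma conj_letter_pow {α : Type} (s : α) (z : FreeGroup α) (t u : ℤ) :
    (z⁻¹ * of s ^ t * z) ^ u = z⁻¹ * of s ^ (t * u) * z := by
  have := conj_zpow (i := u) (a := z⁻¹) (b := of s ^ t)
  rw [inv_inv] at this
  rw [this, zpow_mul]

lemma conj_letter_ne {α : Type} (s : α) (z : FreeGroup α) {t : ℤ} (ht : t ≠ 0) :
    z⁻¹ * of s ^ t * z ≠ 1 := by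
  intro h
  have : of s ^ t = 1 := by
    calc of s ^ t = z * (z⁻¹ * of s ^ t * z) * z⁻¹ := by group
      _ = 1 := by rw [h]; group
  exact zpow_ne_one (of_ne_one s) ht this

/-- Whatever commutes with a conjugate of a nontrivial power of a letter is a conjugate of a
power. -/
lemma eq_conj_of_commute {α : Type} {s : α} {z x : FreeGroup α} {t : ℤ} (ht : t ≠ 0)
    (h : Commute x (z⁻¹ * of s ^ t * z)) : ∃ e : ℤ, x = z⁻¹ * of s ^ e * z := by
  have h1 := (commute_conj_iff z _ _).2 h
  rw [show z * (z⁻¹ * of s ^ t * z) * z⁻¹ = of s ^ t by group] at h1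
  obtain ⟨e, he⟩ := mem_zpowers_of_commute_zpow ht h1
  simp only at he
  exact ⟨e, by rw [he]; group⟩

lemma zpow_smul_coset {α : Type} (K : Subgroup (FreeGroup α)) (s : α) (g : FreeGroup α) (t : ℤ) :
    of s ^ t • (g : FreeGroup α ⧸ K) = g ↔ g⁻¹ * of s ^ t * g ∈ K := by
  rw [eq_comm, MulAction.Quotient.smul_coe, QuotientGroup.eq, smul_eq_mul, mul_assoc]

variable {β' β : Type} {K : Subgroup (FreeGroup β')} (ψ : K →* FreeGroup β)

/-- The cosets `x` and `y` are related when the stabilizer of `x` in `⟨c⟩` corresponds under `ψ` to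
that of `y` in `⟨s⟩`, up to conjugation. -/
def Rel (c : β') (x : FreeGroup β' ⧸ K) (s : β) (y : FreeGroup β ⧸ ψ.range) : Prop :=
  ∃ (g : FreeGroup β') (z : FreeGroup β) (a b : ℤ) (k : K), (g : FreeGroup β' ⧸ K) = x ∧
    (z : FreeGroup β ⧸ ψ.range) = y ∧ a ≠ 0 ∧ b ≠ 0 ∧ (k : FreeGroup β') = g⁻¹ * of c ^ a * g ∧
    ψ k = z⁻¹ * of s ^ b * z

variable {ψ} {c : β'}

lemma rel_smul {x : FreeGroup β' ⧸ K} {s : β} {y : FreeGroup β ⧸ ψ.range} (h : Rel ψ c x s y)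
    (i j : ℤ) : Rel ψ c (of c ^ i • x) s (of s ^ j • y) := by
  obtain ⟨g, z, a, b, k, rfl, rfl, ha, hb, hk, hψ⟩ := h
  refine ⟨of c ^ i * g, of s ^ j * z, a, b, k, rfl, rfl, ha, hb, ?_, ?_⟩
  · rw [hk]; group
  · rw [hψ]; group

/-- A coset `x` determines the letter `s`, and the coset `y` up to the action of `s`. -/
lemma rel_right {x : FreeGroup β' ⧸ K} {s s₀ : β} {y y₀ : FreeGroup β ⧸ ψ.range}
    (h₀ : Rel ψ c x s₀ y₀) (h : Rel ψ c x s y) : s = s₀ ∧ ∃ j : ℤ, y = of s₀ ^ j • y₀ := by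
  obtain ⟨g₀, z₀, a₀, b₀, k₀, rfl, rfl, ha₀, hb₀, hk₀, hψ₀⟩ := h₀
  obtain ⟨g, z, a, b, k, hg, rfl, ha, hb, hk, hψ⟩ := h
  have hm : g⁻¹ * g₀ ∈ K := QuotientGroup.eq.1 hg
  set m : K := ⟨g⁻¹ * g₀, hm⟩
  have h1 : k₀ ^ a = (m⁻¹ * k * m) ^ a₀ := by
    ext
    simp only [Subgroup.coe_zpow, Subgroup.coe_mul, Subgroup.coe_inv, hk₀, hk, m]
    rw [show (g⁻¹ * g₀)⁻¹ * (g⁻¹ * of c ^ a * g) * (g⁻¹ * g₀) = g₀⁻¹ * of c ^ a * g₀ by group,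
      conj_letter_pow, conj_letter_pow, mul_comm]
  have h2 := congrArg ψ h1
  rw [map_zpow, map_zpow, map_mul, map_mul, map_inv, hψ₀, hψ, show (ψ m)⁻¹ * (z⁻¹ * of s ^ b * z) *
    ψ m = (z * ψ m)⁻¹ * of s ^ b * (z * ψ m) by group, conj_letter_pow, conj_letter_pow] at h2
  obtain ⟨rfl, -, j, hj⟩ := conj_letter_inj (mul_ne_zero hb ha₀) h2.symm
  refine ⟨rfl, j, ?_⟩
  rw [MulAction.Quotient.smul_coe, smul_eq_mul, ← hj, QuotientGroup.eq]
  exact ⟨m, by group⟩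

/-- A letter `s` and a coset `y` determine `x` up to the action of `c`. -/
lemma rel_left (hinj : Function.Injective ψ) {x x₀ : FreeGroup β' ⧸ K} {s : β}
    {y : FreeGroup β ⧸ ψ.range}
    (h₀ : Rel ψ c x₀ s y) (h : Rel ψ c x s y) : ∃ j : ℤ, x = of c ^ j • x₀ := by
  obtain ⟨g₀, z₀, a₀, b₀, k₀, rfl, rfl, ha₀, hb₀, hk₀, hψ₀⟩ := h₀
  obtain ⟨g, z, a, b, k, rfl, hz, ha, hb, hk, hψ⟩ := h
  obtain ⟨m, hm⟩ := QuotientGroup.eq.1 hz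
  have h1 : k₀ ^ b = (m⁻¹ * k * m) ^ b₀ := by
    apply hinj
    rw [map_zpow, map_zpow, map_mul, map_mul, map_inv, hψ₀, hψ, hm,
      show (z⁻¹ * z₀)⁻¹ * (z⁻¹ * of s ^ b * z) * (z⁻¹ * z₀) = z₀⁻¹ * of s ^ b * z₀ by group,
      conj_letter_pow, conj_letter_pow, mul_comm]
  have h2 := congrArg (Subtype.val) h1
  simp only [Subgroup.coe_zpow, Subgroup.coe_mul, Subgroup.coe_inv, hk₀, hk] at h2
  rw [show (m : FreeGroup β')⁻¹ * (g⁻¹ * of c ^ a * g) * m = (g * m)⁻¹ * of c ^ a * (g * m) by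
    group, conj_letter_pow, conj_letter_pow] at h2
  obtain ⟨-, -, j, hj⟩ := conj_letter_inj (mul_ne_zero ha hb₀) h2.symm
  refine ⟨j, ?_⟩
  rw [MulAction.Quotient.smul_coe, smul_eq_mul, ← hj, QuotientGroup.eq]
  simp

/-- Corresponding stabilizers have corresponding generators. -/
lemma rel_period (hinj : Function.Injective ψ) {x : FreeGroup β' ⧸ K} {s : β}
    {y : FreeGroup β ⧸ ψ.range} (h : Rel ψ c x s y) {s' : β} {g' : FreeGroup β'}
    {ζ : FreeGroup β} {n t : ℤ} (hn : n ≠ 0) (hg' : (g' : FreeGroup β' ⧸ K) = x) {k' : K}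
    (hk' : (k' : FreeGroup β') = g'⁻¹ * of c ^ n * g') (hψ' : ψ k' = ζ⁻¹ * of s' ^ t * ζ) :
    t.natAbs * MulAction.period (of c) x = n.natAbs * MulAction.period (of s) y := by
  obtain ⟨g, z, a, b, k, rfl, rfl, ha, hb, hk, hψ⟩ := h
  have hm : g⁻¹ * g' ∈ K := QuotientGroup.eq.1 hg'.symm
  set m : K := ⟨g⁻¹ * g', hm⟩
  set p := MulAction.period (of c) (g : FreeGroup β' ⧸ K) with hp
  set r := MulAction.period (of s) (z : FreeGroup β ⧸ ψ.range) with hr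
  have hpK : g⁻¹ * of c ^ (p : ℤ) * g ∈ K := by
    rw [← zpow_smul_coset, zpow_natCast, MulAction.pow_period_smul]
  have hrL : z⁻¹ * of s ^ (r : ℤ) * z ∈ ψ.range := by
    rw [← zpow_smul_coset, zpow_natCast, MulAction.pow_period_smul]
  set κ : K := ⟨_, hpK⟩ with hκ
  obtain ⟨l, hl⟩ := hrL
  -- the image of the generator on the left is a power of the generator on the right
  obtain ⟨e, he⟩ : ∃ e : ℤ, ψ κ = z⁻¹ * of s ^ e * z := by
    apply eq_conj_of_commute hb
    rw [← hψ]
    refine Commute.map ?_ ψ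
    have : Commute (κ : FreeGroup β') k := by
      rw [hk, hκ]
      have := (commute_conj_iff g⁻¹ (of c ^ (p : ℤ)) (of c ^ a)).2 (Commute.zpow_zpow_self _ _ _)
      rwa [inv_inv] at this
    exact Subtype.ext this.eq
  -- and conversely
  obtain ⟨e', he'⟩ : ∃ e' : ℤ, (l : FreeGroup β') = g⁻¹ * of c ^ e' * g := by
    apply eq_conj_of_commute ha
    rw [← hk]
    have : Commute (ψ l) (ψ k) := by
      rw [hl, hψ]
      have := (commute_conj_iff z⁻¹ (of s ^ (r : ℤ)) (of s ^ b)).2 (Commute.zpow_zpow_self _ _ _)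
      rwa [inv_inv] at this
    have h2 : l * k = k * l := hinj (by rw [map_mul, map_mul]; exact this.eq)
    exact congrArg Subtype.val h2
  obtain ⟨u, rfl⟩ : (p : ℤ) ∣ e' := by
    rw [← MulAction.zpow_smul_eq_iff_period_dvd, zpow_smul_coset, ← he']
    exact l.2
  obtain ⟨v, rfl⟩ : (r : ℤ) ∣ e := by
    rw [← MulAction.zpow_smul_eq_iff_period_dvd, zpow_smul_coset, ← he]
    exact ⟨κ, rfl⟩
  obtain ⟨w, rfl⟩ : (p : ℤ) ∣ n := by
    rw [← MulAction.zpow_smul_eq_iff_period_dvd, ← hg', zpow_smul_coset, ← hk']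
    exact k'.2
  have hκl : κ ^ u = l := by
    ext
    rw [Subgroup.coe_zpow, he', hκ, conj_letter_pow]
  have hκk : m⁻¹ * κ ^ w * m = k' := by
    ext
    rw [Subgroup.coe_mul, Subgroup.coe_mul, Subgroup.coe_inv, Subgroup.coe_zpow, hk', hκ,
      conj_letter_pow]
    simp only [m]
    group
  have h3 := congrArg ψ hκl
  rw [map_zpow, he, hl, conj_letter_pow] at h3
  have h4 := congrArg ψ hκk
  rw [map_mul, map_mul, map_inv, map_zpow, he, hψ', conj_letter_pow,
    show (ψ m)⁻¹ * (z⁻¹ * of s ^ (r * v * w) * z) * ψ m =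
      (z * ψ m)⁻¹ * of s ^ (r * v * w) * (z * ψ m) by group] at h4
  have hw : w ≠ 0 := by rintro rfl; simp at hn
  have hr0 : (r : ℤ) * v ≠ 0 := by
    intro h0
    have : κ = 1 := hinj (by rw [he, h0, map_one]; group)
    rw [this, one_zpow] at hκk
    have h5 : k' = 1 := by rw [← hκk]; group
    rw [h5] at hk'
    exact conj_letter_ne c g' hn hk'.symm
  obtain ⟨-, rfl, -⟩ := conj_letter_inj (mul_ne_zero hr0 hw) h4
  have hr1 : (r : ℤ) ≠ 0 := left_ne_zero_of_mul hr0
  obtain ⟨-, h6, -⟩ := conj_letter_inj (s := s) (z := z) hr1 h3.symm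
  have hv : v.natAbs = 1 := by
    have h7 : v * u = 1 := by
      apply mul_left_cancel₀ hr1
      rw [mul_one, ← mul_assoc]; exact h6.symm
    exact Int.natAbs_of_isUnit (IsUnit.of_mul_eq_one _ h7)
  simp only [Int.natAbs_mul, Int.natAbs_natCast, hv]
  ring

lemma card_zpow_orbit {G X : Type} [Group G] [MulAction G X] [Finite X] (a : G) (y : X) :
    Nat.card {y' // ∃ j : ℤ, y' = a ^ j • y} = MulAction.period a y := by
  have : Fintype (MulAction.orbit (Subgroup.zpowers a) y) := Fintype.ofFinite _
  have h := MulAction.minimalPeriod_eq_card (a := a) (b := y)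
  rw [MulAction.period, h, ← Nat.card_eq_fintype_card]
  refine Nat.card_congr (Equiv.subtypeEquivRight fun y' => ?_)
  constructor
  · rintro ⟨j, rfl⟩
    exact ⟨⟨_, j, rfl⟩, rfl⟩
  · rintro ⟨⟨_, j, rfl⟩, rfl⟩
    exact ⟨j, rfl⟩

lemma period_pos {α : Type} (L : Subgroup (FreeGroup α)) [L.FiniteIndex] (s : α)
    (y : FreeGroup α ⧸ L) : 0 < MulAction.period (of s) y := by
  rw [← card_zpow_orbit]
  have : Nonempty {y' // ∃ j : ℤ, y' = of s ^ j • y} := ⟨⟨y, 0, by simp⟩⟩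
  exact Nat.card_pos

lemma period_smul {α : Type} (L : Subgroup (FreeGroup α)) [L.FiniteIndex] (s : α)
    (y : FreeGroup α ⧸ L) (j : ℤ) :
    MulAction.period (of s) (of s ^ j • y) = MulAction.period (of s) y := by
  rw [← card_zpow_orbit, ← card_zpow_orbit]
  refine Nat.card_congr (Equiv.subtypeEquivRight fun y' => ?_)
  constructor
  · rintro ⟨i, rfl⟩
    exact ⟨i + j, by rw [zpow_add, mul_smul]⟩
  · rintro ⟨i, rfl⟩
    exact ⟨i - j, by rw [← mul_smul, ← zpow_add, sub_add_cancel]⟩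

/-- Summing over cosets the translation lengths of the images of the powers `c ^ n₀`: each coset
`y` in `F ⧸ ψ(K)` and each letter in `Per` contribute `n₀`, by double counting of `Rel`. -/
theorem sum_length [Finite β] [K.FiniteIndex] [ψ.range.FiniteIndex] (hinj : Function.Injective ψ)
    (Per : Finset β) {n₀ : ℕ} (hn₀ : n₀ ≠ 0) (q : FreeGroup β' ⧸ K → ℕ)
    (h1 : ∀ g : FreeGroup β', ∃ s ∈ Per, ∃ (ζ : FreeGroup β) (t : ℤ) (k : K),
      (k : FreeGroup β') = g⁻¹ * of c ^ (n₀ : ℤ) * g ∧ ψ k = ζ⁻¹ * of s ^ t * ζ ∧ q g = t.natAbs)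
    (h2 : ∀ s ∈ Per, ∀ z : FreeGroup β, ∃ (t : ℤ) (k : K) (g : FreeGroup β') (a : ℤ), t ≠ 0 ∧
      (k : FreeGroup β') = g⁻¹ * of c ^ a * g ∧ ψ k = z⁻¹ * of s ^ t * z) :
    ∑ᶠ x, q x = n₀ * Per.card * ψ.range.index := by
  classical
  have : Fintype (FreeGroup β' ⧸ K) := Fintype.ofFinite _
  have : Fintype (FreeGroup β ⧸ ψ.range) := Fintype.ofFinite _
  rw [finsum_eq_sum_of_fintype]
  have hn₀' : (n₀ : ℤ) ≠ 0 := by exact_mod_cast hn₀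
  have hp : ∀ x : FreeGroup β' ⧸ K, (MulAction.period (of c) x : ℚ) ≠ 0 := by
    intro x
    exact_mod_cast (period_pos K c x).ne'
  -- the weight of a coset is shared by its related pairs
  have hq : ∀ x, (q x : ℚ) = ∑ p ∈ Per ×ˢ Finset.univ,
      if Rel ψ c x p.1 p.2 then (n₀ : ℚ) / MulAction.period (of c) x else 0 := by
    intro x
    induction x using QuotientGroup.induction_on with
    | H g =>
      obtain ⟨s, hs, ζ, t, k, hk, hψ, hqt⟩ := h1 g
      have ht : t ≠ 0 := by
        rintro rfl
        have : k = 1 := hinj (by rw [hψ, map_one]; group)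
        rw [this] at hk
        exact conj_letter_ne c g hn₀' hk.symm
      have hrel : Rel ψ c g s ζ := ⟨g, ζ, n₀, t, k, rfl, rfl, hn₀', ht, hk, hψ⟩
      have hper := rel_period hinj hrel hn₀' rfl hk hψ
      rw [← hqt, Int.natAbs_natCast] at hper
      rw [← Finset.sum_filter, Finset.sum_const, nsmul_eq_mul]
      have hcard : (Finset.filter (fun p : β × (FreeGroup β ⧸ ψ.range) =>
          Rel ψ c (g : FreeGroup β' ⧸ K) p.1 p.2) (Per ×ˢ Finset.univ)).card =
          MulAction.period (of s) (ζ : FreeGroup β ⧸ ψ.range) := by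
        rw [← card_zpow_orbit, Nat.card_eq_fintype_card, Fintype.card_subtype]
        symm
        apply Finset.card_bij (fun y _ => (s, y))
        · intro y hy
          obtain ⟨j, rfl⟩ := (Finset.mem_filter.1 hy).2
          refine Finset.mem_filter.2 ⟨Finset.mem_product.2 ⟨hs, Finset.mem_univ _⟩, ?_⟩
          simpa using rel_smul hrel 0 j
        · intro y _ y' _ h
          exact (Prod.ext_iff.1 h).2
        · rintro ⟨s', y⟩ hy
          obtain ⟨rfl, j, hj⟩ := rel_right hrel (Finset.mem_filter.1 hy).2
          exact ⟨y, Finset.mem_filter.2 ⟨Finset.mem_univ _, j, hj⟩, rfl⟩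
      rw [hcard]
      field_simp [hp]
      rw [mul_comm _ (n₀ : ℚ)]
      exact_mod_cast hper
  -- each pair receives a total weight `n₀`
  have hy : ∀ p ∈ Per ×ˢ (Finset.univ : Finset (FreeGroup β ⧸ ψ.range)), (∑ x,
      if Rel ψ c x p.1 p.2 then (n₀ : ℚ) / MulAction.period (of c) x else 0) = n₀ := by
    rintro ⟨s, y⟩ hsy
    have hs := (Finset.mem_product.1 hsy).1
    simp only at hs
    induction y using QuotientGroup.induction_on with
    | H z =>
      obtain ⟨t, k, g, a, ht, hk, hψ⟩ := h2 s hs z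
      have ha : a ≠ 0 := by
        rintro rfl
        have : k = 1 := Subtype.ext (by rw [hk, Subgroup.coe_one]; group)
        rw [this, map_one] at hψ
        exact conj_letter_ne s z ht hψ.symm
      have hrel : Rel ψ c g s z := ⟨g, z, a, t, k, rfl, rfl, ha, ht, hk, hψ⟩
      have heq : ∀ x, Rel ψ c x s z ↔ ∃ j : ℤ, x = of c ^ j • (g : FreeGroup β' ⧸ K) := by
        intro x
        constructor
        · exact rel_left hinj hrel
        · rintro ⟨j, rfl⟩
          simpa using rel_smul hrel j 0
      rw [← Finset.sum_filter, Finset.sum_congr (g := fun _ => (n₀ : ℚ) /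
        MulAction.period (of c) (g : FreeGroup β' ⧸ K)) rfl ?_, Finset.sum_const, nsmul_eq_mul]
      · simp only [heq]
        rw [← Fintype.card_subtype, ← Nat.card_eq_fintype_card, card_zpow_orbit]
        field_simp [hp]
      · intro x hx
        obtain ⟨j, rfl⟩ := (heq x).1 (Finset.mem_filter.1 hx).2
        congr 2
        exact_mod_cast period_smul K c g j
  have key : ((∑ x, q x : ℕ) : ℚ) = ((n₀ * Per.card * ψ.range.index : ℕ) : ℚ) := by
    rw [Nat.cast_sum, Finset.sum_congr rfl fun x _ => hq x, Finset.sum_comm,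
      Finset.sum_congr rfl hy, Finset.sum_const, Finset.card_product, Finset.card_univ,
      ← Nat.card_eq_fintype_card, Subgroup.index]
    push_cast
    simp
    ring
  exact_mod_cast key

end Count

/-! ### Rigidity of the non-leaf generators -/

section Rigidity

namespace TreeData

variable {G : Type} [Group G] (D : TreeData G)

lemma a_zpow_ne {v : D.V} {t : ℤ} (ht : t ≠ 0) : D.a v ^ t ≠ 1 := by
  intro h
  have := congrArg (D.e v) h
  rw [map_zpow, D.e_self, (D.e v).map_one] at this
  exact ht (by simpa using congrArg Multiplicative.toAdd this)

lemma conj_a_ne {v : D.V} {t : ℤ} (ht : t ≠ 0) (u : G) : u * D.a v ^ t * u⁻¹ ≠ 1 := by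
  intro h
  exact D.a_zpow_ne ht (conj_eq_one_iff.1 h)

lemma e_conj (v : D.V) (x u : G) : D.e v (u * x * u⁻¹) = D.e v x := by
  rw [map_mul, map_mul, map_inv, mul_comm, inv_mul_cancel_left]

/-- Conjugates of nontrivial powers of different generators are different. -/
lemma conj_inj {v w : D.V} {t t' : ℤ} {u u' : G} (ht : t ≠ 0)
    (h : u * D.a v ^ t * u⁻¹ = u' * D.a w ^ t' * u'⁻¹) : w = v := by
  by_contra hne
  have := congrArg (D.e v) h
  rw [e_conj, e_conj, map_zpow, map_zpow, D.e_self, D.e_ne v w hne, one_zpow] at this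
  exact ht (by simpa using congrArg Multiplicative.toAdd this)

/-- The conjugates of powers of generators which commute with a power of `a v`: powers of `a v`
and, in the free factor of the centralizer, conjugates of powers of neighbouring generators. -/
lemma classify {v w : D.V} {y u : G} {t b : ℤ} (hb : b ≠ 0) (ht : t ≠ 0)
    (hy : y = u * D.a w ^ t * u⁻¹) (h : Commute y (D.a v ^ b)) :
    (w = v ∧ y = D.a v ^ t) ∨
      ∃ s ∈ D.per v, ∃ ζ, D.nb v s = w ∧ y = D.ι v (ζ * of s ^ t * ζ⁻¹) := by
  have h1 : Commute (D.a v) y := by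
    obtain ⟨s, hs⟩ := D.cent v b y hb h
    rw [hs]
    exact ((Commute.refl _).zpow_right s).mul_right (D.a_comm v _)
  have h2 : Commute (u⁻¹ * D.a v * u) (D.a w ^ t) := by
    have := (commute_conj_iff u⁻¹ _ _).2 h1
    rw [hy] at this
    convert this using 1 <;> group
  obtain ⟨e, he⟩ := D.cent w t _ ht h2
  have hπ : D.π w (u⁻¹ * D.a v * u) = (D.π w u)⁻¹ * D.π w (D.a v) * D.π w u := by
    rw [map_mul, map_mul, map_inv]
  rw [hπ] at he
  by_cases hvw : w = v
  · left
    subst hvw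
    refine ⟨rfl, ?_⟩
    rw [D.π_a, mul_one, inv_mul_cancel, map_one, mul_one] at he
    have h3 := congrArg (D.e w) he
    rw [map_mul, map_mul, map_inv, mul_comm, mul_inv_cancel_left, map_zpow, D.e_self] at h3
    have h4 : e = 1 := by simpa [eq_comm] using congrArg Multiplicative.toAdd h3
    subst h4
    have h5 : Commute u (D.a w) := by
      rw [zpow_one, mul_assoc, inv_mul_eq_iff_eq_mul] at he
      exact he.symm
    rw [hy, (h5.zpow_right t).eq, mul_inv_cancel_right]
  · right
    rcases D.adj v w with h3 | h3 | ⟨⟨s, hs, hsw⟩, ⟨s', hs', hsv⟩⟩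
    · exact absurd h3.symm hvw
    · exfalso
      rw [h3, mul_one, inv_mul_cancel, map_one, mul_one] at he
      have h4 := congrArg (D.e v) he
      rw [map_mul, map_mul, map_inv, mul_comm, mul_inv_cancel_left, map_zpow, D.e_self,
        D.e_ne v w hvw, one_zpow] at h4
      exact absurd (congrArg Multiplicative.toAdd h4) (by simp)
    · have h4 : D.ι w (of s') = D.a v := by rw [D.ι_nb w s' hs', hsv]
      have h5 : D.π w (D.a v) = of s' := by rw [← h4, D.π_ι]
      rw [h5, map_mul, map_mul, map_inv, h4] at he
      set r := D.ι w (D.π w u) with hr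
      have he0 : e = 0 := by
        have h6 := congrArg (D.e w) he
        simp only [map_mul, map_inv, map_zpow, D.e_self, D.e_ne w v (Ne.symm hvw)] at h6
        simpa [eq_comm] using congrArg Multiplicative.toAdd h6
      rw [he0, zpow_zero, one_mul] at he
      have h6 : Commute (u * r⁻¹) (D.a v ^ (1 : ℤ)) := by
        rw [zpow_one]
        have : u * r⁻¹ * D.a v = D.a v * (u * r⁻¹) := by
          calc u * r⁻¹ * D.a v = u * (r⁻¹ * D.a v * r) * r⁻¹ := by group
            _ = u * (u⁻¹ * D.a v * u) * r⁻¹ := by rw [he]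
            _ = _ := by group
        exact this
      obtain ⟨k, hk⟩ := D.cent v 1 _ one_ne_zero h6
      set ζ := D.π v (u * r⁻¹)
      refine ⟨s, hs, ζ, hsw, ?_⟩
      have h7 : u = D.a v ^ k * D.ι v ζ * r := by rw [← hk]; group
      have h8 : Commute r (D.a w ^ t) := ((D.a_comm w _).zpow_left t).symm
      have h9 : D.ι v (of s ^ t) = D.a w ^ t := by rw [map_zpow, D.ι_nb v s hs, hsw]
      calc y = D.a v ^ k * D.ι v ζ * (r * D.a w ^ t) * r⁻¹ * (D.ι v ζ)⁻¹ * (D.a v ^ k)⁻¹ := by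
            rw [hy, h7]; group
        _ = D.a v ^ k * (D.ι v ζ * D.a w ^ t * (D.ι v ζ)⁻¹) * (D.a v ^ k)⁻¹ := by
            rw [h8.eq]; group
        _ = D.a v ^ k * D.ι v (ζ * of s ^ t * ζ⁻¹) * (D.a v ^ k)⁻¹ := by
            rw [← h9, map_mul, map_mul, map_inv]
        _ = _ := by
            rw [((D.a_comm v _).zpow_left k).eq]; group

end TreeData

lemma pow_factorial_mem {G : Type} [Group G] (H : Subgroup G) [H.FiniteIndex] (g : G) :
    g ^ (H.index.factorial) ∈ H :=
  Subgroup.pow_mem_of_index_ne_zero_of_dvd Subgroup.FiniteIndex.index_ne_zero g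
    fun _ h h' => Nat.dvd_factorial h h'

lemma zpow_factorial_mem {G : Type} [Group G] (H : Subgroup G) [H.FiniteIndex] (g : G) :
    g ^ (H.index.factorial : ℤ) ∈ H := by
  rw [zpow_natCast]; exact pow_factorial_mem H g

lemma exists_not_commute (α : Type) [Nontrivial α] : ∃ x y : FreeGroup α, ¬ Commute x y := by
  classical
  obtain ⟨s, t, hst⟩ := exists_pair_ne α
  refine ⟨of s, of t, fun h => ?_⟩
  obtain ⟨k, hk⟩ := mem_zpowers_of_commute h
  have := congrArg (expo s) hk
  rw [map_zpow, expo_of_self, expo_of_ne hst.symm, one_zpow] at this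
  exact absurd (congrArg Multiplicative.toAdd this) (by simp)

variable {G G' : Type} [Group G] [Group G'] {H : Subgroup G'} {A : Subgroup G}

/-- An isomorphism between finite index subgroups preserves the set of conjugates of nontrivial
powers of non-leaf generators, since these are the nontrivial elements with centralizers that are
not virtually abelian. -/
lemma transfer (D : TreeData G) (D' : TreeData G') [H.FiniteIndex] (φ : H ≃* A) {h : H}
    {w : D'.V} {t : ℤ} {u : G'} (ht : t ≠ 0) (hh : (h : G') = u * D'.a w ^ t * u⁻¹) :
    ∃ (v : D.V) (t' : ℤ) (u' : G), t' ≠ 0 ∧ (φ h : G) = u' * D.a v ^ t' * u'⁻¹ := by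
  obtain ⟨x, y, hxy⟩ := exists_not_commute (D'.B w)
  set N := H.index.factorial with hN
  have hN0 : N ≠ 0 := Nat.factorial_ne_zero _
  let lift : FreeGroup (D'.B w) → H := fun x =>
    ⟨(u * D'.ι w x * u⁻¹) ^ N, pow_factorial_mem H _⟩
  have hc : ∀ x, Commute (lift x) h := by
    intro x
    have : Commute ((lift x : H) : G') h := by
      rw [hh]
      refine Commute.pow_left ?_ N
      rw [commute_conj_iff]
      exact ((D'.a_comm w x).zpow_left t).symm
    exact Subtype.ext this.eq
  have hnc : ¬ Commute (lift x) (lift y) := by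
    intro hc
    have h1 : Commute ((u * D'.ι w x * u⁻¹) ^ N) ((u * D'.ι w y * u⁻¹) ^ N) :=
      congrArg Subtype.val hc.eq
    rw [conj_pow, conj_pow, commute_conj_iff] at h1
    have h2 := h1.map (D'.π w)
    rw [map_pow, map_pow, D'.π_ι, D'.π_ι] at h2
    exact hxy (commute_of_pow hN0 (commute_of_pow hN0 h2.symm).symm)
  obtain ⟨v, t', u', h'⟩ := D.nc (φ h : G) ⟨φ (lift x), φ (lift y),
    congrArg Subtype.val ((hc x).map φ).eq, congrArg Subtype.val ((hc y).map φ).eq, by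
      intro h1
      have h2 : Commute (φ (lift x)) (φ (lift y)) := Subtype.ext h1.eq
      apply hnc
      have := h2.map φ.symm
      simpa using this⟩
  refine ⟨v, t', u', ?_, h'⟩
  rintro rfl
  have h1 : (φ h : G) = 1 := by rw [h']; group
  have h2 : h = 1 := by
    apply φ.injective
    rw [map_one]; exact Subtype.ext h1
  rw [h2] at hh
  exact D'.conj_a_ne ht u hh.symm

end Rigidity

/-! ### The relation at a pivot and its sum over all cosets -/

section Local

lemma finiteIndex_comap {X Y : Type} [Group X] [Group Y] (f : X →* Y) (L : Subgroup Y)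
    [L.FiniteIndex] : (L.comap f).FiniteIndex := by
  constructor
  rw [Subgroup.index_comap]
  exact Subgroup.FiniteIndex.index_ne_zero

namespace TreeData

variable {G G' : Type} [Group G] [Group G'] {H : Subgroup G'} {A : Subgroup G}

/-- The total length `∑ |e v x|`; it is `|t|` on the conjugates of `a v ^ t`. -/
def len (D : TreeData G) (x : G) : ℕ :=
  ∑ v, (Multiplicative.toAdd (D.e v x)).natAbs

lemma len_conj (D : TreeData G) (u x : G) : D.len (u * x * u⁻¹) = D.len x := by
  simp only [len, e_conj]

lemma len_conj_a (D : TreeData G) (u : G) (v : D.V) (t : ℤ) :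
    D.len (u * D.a v ^ t * u⁻¹) = t.natAbs := by
  rw [len_conj, len, Finset.sum_eq_single v]
  · rw [map_zpow, D.e_self]; simp
  · intro w _ hw
    rw [map_zpow, D.e_ne w v hw.symm, one_zpow]; simp
  · simp

/-- An element of `H` conjugate to the power of `a v` with exponent `[G' : H]!`. -/
noncomputable def root (D' : TreeData G') (H : Subgroup G') [H.FiniteIndex] (v : D'.V) (y : G') : H :=
  ⟨y⁻¹ * D'.a v ^ (H.index.factorial : ℤ) * y, by
    have := zpow_factorial_mem H (y⁻¹ * D'.a v * y⁻¹⁻¹)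
    rwa [conj_zpow, inv_inv] at this⟩

lemma root_ne (H : Subgroup G') : (H.index.factorial : ℤ) ≠ 0 := by
  exact_mod_cast Nat.factorial_ne_zero _

/-- An element commuting with a conjugate of a nontrivial power of `a v` lies in the corresponding
conjugate of the centralizer of `a v`. -/
lemma decomp (D : TreeData G) {v : D.V} {b : ℤ} {u x : G} (hb : b ≠ 0)
    (h : Commute x (u * D.a v ^ b * u⁻¹)) :
    ∃ s : ℤ, u⁻¹ * x * u = D.a v ^ s * D.ι v (D.π v (u⁻¹ * x * u)) := by
  have h1 := (commute_conj_iff u⁻¹ _ _).2 h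
  rw [show u⁻¹ * (u * D.a v ^ b * u⁻¹) * u⁻¹⁻¹ = D.a v ^ b by group, inv_inv] at h1
  exact D.cent v b _ hb h1

/-- The composite of conjugation by `u⁻¹` and of `π v`, on a subgroup. -/
def proj (D : TreeData G) (A : Subgroup G) (v : D.V) (u : G) : A →* FreeGroup (D.B v) :=
  ((D.π v).comp (MulAut.conj u⁻¹).toMonoidHom).comp A.subtype

lemma proj_apply (D : TreeData G) (v : D.V) (u : G) (x : A) :
    D.proj A v u x = D.π v (u⁻¹ * x * u) := by
  simp [proj]

/-- The composite of `ι v` and of conjugation by `u`. -/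
def incl (D : TreeData G) (v : D.V) (u : G) : FreeGroup (D.B v) →* G :=
  (MulAut.conj u).toMonoidHom.comp (D.ι v)

lemma incl_apply (D : TreeData G) (v : D.V) (u : G) (x : FreeGroup (D.B v)) :
    D.incl v u x = u * D.ι v x * u⁻¹ := by
  simp [incl]

lemma incl_commute (D : TreeData G) (v : D.V) (u : G) (x : FreeGroup (D.B v)) (b : ℤ) :
    Commute (D.incl v u x) (u * D.a v ^ b * u⁻¹) := by
  rw [incl_apply, commute_conj_iff]
  exact ((D.a_comm v x).zpow_left b).symm

section

variable (D : TreeData G) (D' : TreeData G') (φ : H ≃* A)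
  {v' : D'.V} {K : Subgroup (FreeGroup (D'.B v'))} {g : G'} {v : D.V} {b : ℤ} {u : G}

/-- The inclusion of `K` in `H` by way of `ι v'` and of conjugation by `g⁻¹`. -/
def kap (hK : ∀ k, k ∈ K ↔ D'.incl v' g⁻¹ k ∈ H) : K →* H :=
  ((D'.incl v' g⁻¹).comp K.subtype).codRestrict H fun k => (hK k).1 k.2

/-- The homomorphism of free groups induced by `φ`. -/
def psi (v : D.V) (u : G) (hK : ∀ k, k ∈ K ↔ D'.incl v' g⁻¹ k ∈ H) : K →* FreeGroup (D.B v) :=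
  (D.proj A v u).comp (φ.toMonoidHom.comp (kap D' hK))

lemma psi_apply (hK : ∀ k, k ∈ K ↔ D'.incl v' g⁻¹ k ∈ H) (k : K) :
    psi D D' φ v u hK k = D.proj A v u (φ (kap D' hK k)) := rfl

lemma kap_coe (hK : ∀ k, k ∈ K ↔ D'.incl v' g⁻¹ k ∈ H) (k : K) :
    (kap D' hK k : G') = g⁻¹ * D'.ι v' k * g := by
  change D'.incl v' g⁻¹ k = _
  rw [incl_apply, inv_inv]

lemma root_coe [H.FiniteIndex] (w : D'.V) (y : G') :
    (D'.root H w y : G') = y⁻¹ * D'.a w ^ (H.index.factorial : ℤ) * y⁻¹⁻¹ := by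
  rw [inv_inv]; rfl

lemma commute_phi [H.FiniteIndex] (hK : ∀ k, k ∈ K ↔ D'.incl v' g⁻¹ k ∈ H)
    (hw : (φ (D'.root H v' g) : G) = u * D.a v ^ b * u⁻¹) (k : K) :
    Commute (φ (kap D' hK k) : G) (u * D.a v ^ b * u⁻¹) := by
  rw [← hw]
  have : Commute (kap D' hK k) (D'.root H v' g) := by
    apply Subtype.ext
    have := D'.incl_commute v' g⁻¹ k (H.index.factorial : ℤ)
    rw [← root_coe] at this
    exact this.eq
  exact congrArg Subtype.val (this.map φ).eq

lemma psi_injective [H.FiniteIndex] (hb : b ≠ 0) (hK : ∀ k, k ∈ K ↔ D'.incl v' g⁻¹ k ∈ H)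
    (hw : (φ (D'.root H v' g) : G) = u * D.a v ^ b * u⁻¹) :
    Function.Injective (psi D D' φ v u hK) := by
  rw [injective_iff_map_eq_one]
  intro k hk
  obtain ⟨s, hs⟩ := D.decomp hb (commute_phi D D' φ hK hw k)
  rw [← proj_apply, ← psi_apply, hk, map_one, mul_one] at hs
  have h1 : (φ (kap D' hK k)) ^ b = (φ (D'.root H v' g)) ^ s := by
    apply Subtype.ext
    rw [Subgroup.coe_zpow, Subgroup.coe_zpow, hw, conj_zpow, ← zpow_mul, mul_comm, zpow_mul, ← hs]
    rw [show u⁻¹ * (φ (kap D' hK k) : G) * u = u⁻¹ * (φ (kap D' hK k) : G) * u⁻¹⁻¹ by group,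
      conj_zpow]
    group
  rw [← map_zpow φ, ← map_zpow φ, φ.injective.eq_iff] at h1
  have h2 := congrArg (D'.proj H v' g⁻¹) h1
  rw [map_zpow, map_zpow, proj_apply, proj_apply, kap_coe, root_coe] at h2
  simp only [inv_inv] at h2
  rw [show g * (g⁻¹ * D'.ι v' k * g) * g⁻¹ = D'.ι v' k by group, D'.π_ι,
    show g * (g⁻¹ * D'.a v' ^ (H.index.factorial : ℤ) * g) * g⁻¹ = D'.a v' ^ (H.index.factorial : ℤ)
      by group, map_zpow, D'.π_a, one_zpow, one_zpow] at h2
  apply Subtype.ext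
  exact (IsMulTorsionFree.zpow_eq_one_iff_left hb).1 h2

lemma psi_finiteIndex [H.FiniteIndex] [A.FiniteIndex] (hK : ∀ k, k ∈ K ↔ D'.incl v' g⁻¹ k ∈ H) [K.FiniteIndex]
    (hw : (φ (D'.root H v' g) : G) = u * D.a v ^ b * u⁻¹) :
    (psi D D' φ v u hK).range.FiniteIndex := by
  let f := (D.incl v u).subgroupComap A
  let θ : A.comap (D.incl v u) →* FreeGroup (D'.B v') :=
    (D'.proj H v' g⁻¹).comp (φ.symm.toMonoidHom.comp f)
  have h1 : ((K.comap θ).map (A.comap (D.incl v u)).subtype).FiniteIndex := by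
    have := finiteIndex_comap θ K
    have := finiteIndex_comap (D.incl v u) A
    constructor
    rw [Subgroup.index_map_subtype]
    exact mul_ne_zero Subgroup.FiniteIndex.index_ne_zero Subgroup.FiniteIndex.index_ne_zero
  refine Subgroup.finiteIndex_of_le (H := (K.comap θ).map (A.comap (D.incl v u)).subtype) ?_
  rintro _ ⟨x, hx, rfl⟩
  rw [SetLike.mem_coe, Subgroup.mem_comap] at hx
  set y : H := φ.symm (f x) with hy
  have hcy : Commute y (D'.root H v' g) := by
    have h2 : Commute (f x) (φ (D'.root H v' g)) := by
      apply Subtype.ext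
      have h3 := D.incl_commute v u x b
      rw [← hw] at h3
      exact h3.eq
    have := h2.map φ.symm
    rwa [MulEquiv.symm_apply_apply] at this
  have hcy' : Commute (y : G') (D'.root H v' g) := congrArg Subtype.val hcy.eq
  rw [root_coe] at hcy'
  obtain ⟨s, hs⟩ := D'.decomp (root_ne H) hcy'
  rw [← proj_apply, inv_inv] at hs
  have hθ : θ x = D'.proj H v' g⁻¹ y := rfl
  rw [← hθ] at hs
  -- the factor of `y` in the center of the centralizer, which `proj ∘ φ` kills
  set r : H := y * (kap D' hK ⟨θ x, hx⟩)⁻¹ with hr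
  have hr1 : (r : G') = g⁻¹ * D'.a v' ^ s * g⁻¹⁻¹ := by
    rw [hr, Subgroup.coe_mul, Subgroup.coe_inv, kap_coe]
    calc (y : G') * (g⁻¹ * D'.ι v' (θ x) * g)⁻¹
        = g⁻¹ * (g * y * g⁻¹) * (D'.ι v' (θ x))⁻¹ * g := by group
      _ = _ := by rw [hs]; group
  have hr2 : r ^ (H.index.factorial : ℤ) = D'.root H v' g ^ s := by
    apply Subtype.ext
    rw [Subgroup.coe_zpow, Subgroup.coe_zpow, hr1, root_coe, conj_zpow, conj_zpow, ← zpow_mul,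
      ← zpow_mul, mul_comm]
  have hr3 : D.proj A v u (φ r) = 1 := by
    have h3 := congrArg (fun z => D.proj A v u (φ z)) hr2
    simp only [map_zpow] at h3
    rw [proj_apply (x := φ (D'.root H v' g)), hw,
      show u⁻¹ * (u * D.a v ^ b * u⁻¹) * u = D.a v ^ b by group, map_zpow, D.π_a, one_zpow,
      one_zpow] at h3
    exact (IsMulTorsionFree.zpow_eq_one_iff_left (root_ne H)).1 h3
  refine ⟨⟨θ x, hx⟩, ?_⟩
  have hyr : y = r * kap D' hK ⟨θ x, hx⟩ := by rw [hr, inv_mul_cancel_right]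
  have h4 : D.proj A v u (φ y) = x := by
    rw [hy, MulEquiv.apply_symm_apply, proj_apply]
    change D.π v (u⁻¹ * D.incl v u x * u) = x
    rw [incl_apply, show u⁻¹ * (u * D.ι v x * u⁻¹) * u = D.ι v x by group, D.π_ι]
  rw [hyr, map_mul, map_mul, hr3, one_mul] at h4
  rw [psi_apply, h4]
  rfl

/-- The length of the image under `φ` of a power of `y⁻¹ * a w * y`. -/
noncomputable def imgLen [H.FiniteIndex] (w : D'.V) (y : G') : ℕ :=
  D.len (φ (D'.root H w y))

lemma imgLen_mul [H.FiniteIndex] (w : D'.V) (y : G') (h : H) :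
    imgLen D D' φ w (y * h) = imgLen D D' φ w y := by
  have h1 : D'.root H w (y * h) = h⁻¹ * D'.root H w y * h⁻¹⁻¹ := by
    apply Subtype.ext
    simp only [root_coe, Subgroup.coe_mul, Subgroup.coe_inv]
    group
  rw [imgLen, h1, map_mul, map_mul, map_inv, map_inv, map_inv, Subgroup.coe_mul, Subgroup.coe_mul,
    Subgroup.coe_inv _ ((φ h)⁻¹), len_conj]
  rfl

/-- At a vertex `v'` corresponding to `v`, the homomorphism `psi` identifies finite index subgroups
of the free groups on the neighbours of `v'` and of `v`. Comparing Euler characteristics with the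
sum of the lengths of the images of the neighbour of `v'` gives this relation. -/
lemma local_sum [H.FiniteIndex] [A.FiniteIndex] [K.FiniteIndex] (hb : b ≠ 0)
    (hK : ∀ k, k ∈ K ↔ D'.incl v' g⁻¹ k ∈ H)
    (hw : (φ (D'.root H v' g) : G) = u * D.a v ^ b * u⁻¹)
    {s' : D'.B v'} (hs' : D'.per v' = {s'}) (q : FreeGroup (D'.B v') ⧸ K → ℕ)
    (hq : ∀ x : FreeGroup (D'.B v'), q x = imgLen D D' φ (D'.nb v' s') (D'.ι v' x * g)) :
    (∑ᶠ x, q x) * (Fintype.card (D.B v) - 1) =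
      H.index.factorial * (D.per v).card * (K.index * (Fintype.card (D'.B v') - 1)) := by
  have hinj := psi_injective D D' φ hb hK hw
  have hfin := psi_finiteIndex D D' φ hK hw
  have hmem : s' ∈ D'.per v' := by rw [hs']; exact Finset.mem_singleton_self _
  have hN : H.index.factorial ≠ 0 := Nat.factorial_ne_zero _
  have hsum := sum_length (c := s') hinj (D.per v) hN q ?_ ?_
  · have hE := euler_char K (psi D D' φ v u hK).range (MonoidHom.ofInjective hinj)
    rw [hsum]
    have h1 : 1 ≤ Fintype.card (D.B v) := Fintype.card_pos
    have h2 : 1 ≤ Fintype.card (D'.B v') := Fintype.card_pos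
    obtain ⟨p, hp⟩ := Nat.exists_eq_add_of_le h1
    obtain ⟨r, hr⟩ := Nat.exists_eq_add_of_le h2
    rw [hp, hr] at hE ⊢
    simp only [Nat.add_sub_cancel_left]
    have h3 : (psi D D' φ v u hK).range.index * p = K.index * r := by nlinarith
    rw [mul_assoc, h3]
  · intro x
    have hk : D'.incl v' g⁻¹ (x⁻¹ * of s' ^ (H.index.factorial : ℤ) * x) =
        D'.root H (D'.nb v' s') (D'.ι v' x * g) := by
      rw [incl_apply, root_coe, map_mul, map_mul, map_inv, map_zpow, D'.ι_nb v' s' hmem]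
      group
    have hkK : x⁻¹ * of s' ^ (H.index.factorial : ℤ) * x ∈ K := by
      rw [hK, hk]; exact Subtype.mem _
    have hkap : kap D' hK ⟨_, hkK⟩ = D'.root H (D'.nb v' s') (D'.ι v' x * g) := Subtype.ext hk
    obtain ⟨w, t, U, ht, hU⟩ := transfer D D' φ (root_ne H)
      (root_coe D' (H := H) (D'.nb v' s') (D'.ι v' x * g))
    have hc := (commute_conj_iff u⁻¹ _ _).2 (commute_phi D D' φ hK hw ⟨_, hkK⟩)
    rw [show u⁻¹ * (u * D.a v ^ b * u⁻¹) * u⁻¹⁻¹ = D.a v ^ b by group, hkap] at hc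
    have hpsi : psi D D' φ v u hK ⟨_, hkK⟩ =
        D.π v (u⁻¹ * φ (D'.root H (D'.nb v' s') (D'.ι v' x * g)) * u⁻¹⁻¹) := by
      rw [psi_apply, proj_apply, hkap, inv_inv]
    rcases D.classify (u := u⁻¹ * U) (w := w) (t := t) hb ht (by rw [hU]; group) hc with
      ⟨-, h⟩ | ⟨s, hs, ζ, -, h⟩
    · exfalso
      rw [h, map_zpow, D.π_a, one_zpow] at hpsi
      have h1 := hinj (hpsi.trans (map_one _).symm)
      exact conj_letter_ne s' x (root_ne H) (congrArg Subtype.val h1)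
    · rw [h, D.π_ι] at hpsi
      refine ⟨s, hs, ζ⁻¹, t, ⟨_, hkK⟩, rfl, by rw [inv_inv]; exact hpsi, ?_⟩
      rw [hq, imgLen, hU, len_conj_a]
  · intro s hs z
    set N := A.index.factorial
    have hyA : D.incl v u (z⁻¹ * of s ^ (N : ℤ) * z) ∈ A := by
      have := zpow_factorial_mem A (D.incl v u (z⁻¹ * of s * z⁻¹⁻¹))
      rwa [← map_zpow, conj_zpow, inv_inv] at this
    obtain ⟨w, t, U, ht, hU⟩ := transfer D' D φ.symm (h := ⟨_, hyA⟩) (w := D.nb v s) (t := N)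
      (u := u * D.ι v z⁻¹) (root_ne A) (by
        change D.incl v u _ = _
        rw [incl_apply, map_mul, map_mul, map_inv, map_zpow, D.ι_nb v s hs]
        group)
    set y : A := ⟨_, hyA⟩ with hy
    have hpy : D.proj A v u y = z⁻¹ * of s ^ (N : ℤ) * z := by
      rw [proj_apply]
      change D.π v (u⁻¹ * D.incl v u _ * u) = _
      rw [incl_apply]
      generalize z⁻¹ * of s ^ (N : ℤ) * z = x
      rw [show u⁻¹ * (u * D.ι v x * u⁻¹) * u = D.ι v x by group, D.π_ι]
    have hc : Commute (φ.symm y : G') (D'.root H v' g) := by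
      have h1 : Commute y (φ (D'.root H v' g)) := by
        apply Subtype.ext
        have h3 := D.incl_commute v u (z⁻¹ * of s ^ (N : ℤ) * z) b
        rw [← hw] at h3
        exact h3.eq
      have := h1.map φ.symm
      rw [MulEquiv.symm_apply_apply] at this
      exact congrArg Subtype.val this.eq
    rw [root_coe] at hc
    have hc' := (commute_conj_iff g _ _).2 hc
    rw [show g * (g⁻¹ * D'.a v' ^ (H.index.factorial : ℤ) * g⁻¹⁻¹) * g⁻¹ =
      D'.a v' ^ (H.index.factorial : ℤ) by group] at hc'
    rcases D'.classify (u := g * U) (w := w) (t := t) (root_ne H) ht (by rw [hU]; group) hc' with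
      ⟨-, h⟩ | ⟨σ, hσ, ζ, -, h⟩
    · exfalso
      have h1 : (φ.symm y) ^ (H.index.factorial : ℤ) = D'.root H v' g ^ t := by
        apply Subtype.ext
        have h2 : (φ.symm y : G') = g⁻¹ * D'.a v' ^ t * g⁻¹⁻¹ := by rw [← h]; group
        rw [Subgroup.coe_zpow, Subgroup.coe_zpow, h2, root_coe, conj_zpow, conj_zpow, ← zpow_mul,
          ← zpow_mul, mul_comm]
      have h2 := congrArg (fun x => D.proj A v u (φ x)) h1
      simp only [map_zpow, MulEquiv.apply_symm_apply] at h2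
      rw [proj_apply (x := φ (D'.root H v' g)), hw,
        show u⁻¹ * (u * D.a v ^ b * u⁻¹) * u = D.a v ^ b by group, map_zpow, D.π_a, one_zpow,
        one_zpow, hpy] at h2
      exact conj_letter_ne s z (root_ne A) ((IsMulTorsionFree.zpow_eq_one_iff_left (root_ne H)).1 h2)
    · rw [hs', Finset.mem_singleton] at hσ
      subst hσ
      have h1 : D'.incl v' g⁻¹ (ζ * of σ ^ t * ζ⁻¹) = φ.symm y := by
        rw [incl_apply, ← h]; group
      have h2 : ζ * of σ ^ t * ζ⁻¹ ∈ K := by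
        rw [hK, h1]; exact Subtype.mem _
      have h3 : kap D' hK ⟨_, h2⟩ = φ.symm y := Subtype.ext h1
      refine ⟨N, ⟨_, h2⟩, ζ⁻¹, t, root_ne A, by rw [inv_inv], ?_⟩
      rw [psi_apply, h3, MulEquiv.apply_symm_apply, hpy]


/-- The generator `a v'` has type `τ` at `g` if `φ` maps conjugates of its powers to conjugates of
powers of a generator on the side `τ` of the bipartition (center or pivot). -/
def HasType [H.FiniteIndex] (g : G') (v' : D'.V) (τ : Bool) : Prop :=
  ∃ (v : D.V) (b : ℤ) (u : G), b ≠ 0 ∧ (φ (D'.root H v' g) : G) = u * D.a v ^ b * u⁻¹ ∧ D.cen v = τ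

lemma hasType_exists [H.FiniteIndex] (g : G') (v' : D'.V) : ∃ τ, HasType D D' φ g v' τ := by
  obtain ⟨v, t, u, ht, hu⟩ := transfer D D' φ (root_ne H) (root_coe D' (H := H) v' g)
  exact ⟨_, v, t, u, ht, hu, rfl⟩

lemma hasType_unique [H.FiniteIndex] {g : G'} {v' : D'.V} {τ τ' : Bool}
    (h : HasType D D' φ g v' τ) (h' : HasType D D' φ g v' τ') : τ = τ' := by
  obtain ⟨v, b, u, hb, hu, rfl⟩ := h
  obtain ⟨w, c, r, -, hr, rfl⟩ := h'
  rw [D.conj_inj hb (hu.symm.trans hr)]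

lemma hasType_nb [H.FiniteIndex] {g : G'} {v' : D'.V} {τ : Bool} {s' : D'.B v'}
    (hs' : s' ∈ D'.per v') (h : HasType D D' φ g v' τ) :
    HasType D D' φ g (D'.nb v' s') (!τ) := by
  obtain ⟨v, b, u, hb, hu, rfl⟩ := h
  obtain ⟨w, t, U, ht, hU⟩ := transfer D D' φ (root_ne H) (root_coe D' (H := H) (D'.nb v' s') g)
  refine ⟨w, t, U, ht, hU, ?_⟩
  have hc : Commute (D'.root H (D'.nb v' s') g) (D'.root H v' g) := by
    apply Subtype.ext
    have h1 := D'.incl_commute v' g⁻¹ (of s' ^ (H.index.factorial : ℤ)) H.index.factorial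
    rw [incl_apply, map_zpow, D'.ι_nb v' s' hs', ← root_coe, ← root_coe] at h1
    exact h1.eq
  have hc1 : Commute (φ (D'.root H (D'.nb v' s') g) : G) (φ (D'.root H v' g)) :=
    congrArg Subtype.val (hc.map φ).eq
  rw [hu] at hc1
  have hc2 := (commute_conj_iff u⁻¹ _ _).2 hc1
  rw [show u⁻¹ * (u * D.a v ^ b * u⁻¹) * u⁻¹⁻¹ = D.a v ^ b by group] at hc2
  rcases D.classify (u := u⁻¹ * U) (w := w) (t := t) hb ht (by rw [hU]; group) hc2 with
    ⟨-, h⟩ | ⟨s, hs, ζ, hw, -⟩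
  · exfalso
    have h1 : D'.root H (D'.nb v' s') g ^ b = D'.root H v' g ^ t := by
      apply φ.injective
      apply Subtype.ext
      have h2 : (φ (D'.root H (D'.nb v' s') g) : G) = u * D.a v ^ t * u⁻¹ := by rw [← h]; group
      rw [map_zpow, map_zpow, Subgroup.coe_zpow, Subgroup.coe_zpow, h2, hu, conj_zpow, conj_zpow,
        ← zpow_mul, ← zpow_mul, mul_comm]
    have h2 := congrArg Subtype.val h1
    rw [Subgroup.coe_zpow, Subgroup.coe_zpow, root_coe, root_coe, conj_zpow, conj_zpow, ← zpow_mul,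
      ← zpow_mul] at h2
    have h3 := D'.conj_inj (mul_ne_zero (root_ne H) hb) h2
    have h4 := D'.cen_nb v' s' hs'
    rw [← h3] at h4
    simp at h4
  · rw [← hw]
    exact D.cen_nb v s hs

lemma hasType_mul [H.FiniteIndex] {x g : G'} {v' : D'.V} {τ : Bool} (hx : Commute x (D'.a v'))
    (h : HasType D D' φ g v' τ) : HasType D D' φ (x * g) v' τ := by
  have h1 : D'.root H v' (x * g) = D'.root H v' g := by
    apply Subtype.ext
    have h2 := (hx.zpow_right (H.index.factorial : ℤ)).eq
    rw [root_coe, root_coe]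
    calc (x * g)⁻¹ * D'.a v' ^ (H.index.factorial : ℤ) * (x * g)⁻¹⁻¹
        = g⁻¹ * x⁻¹ * (D'.a v' ^ (H.index.factorial : ℤ) * x) * g := by group
      _ = _ := by rw [← h2]; group
  rw [HasType, h1]
  exact h

lemma hasType_center [H.FiniteIndex] (x : G') : ∀ (g : G') (τ : Bool),
    HasType D D' φ g D'.center τ → HasType D D' φ (x * g) D'.center τ := by
  have hx : x ∈ Subgroup.closure {g : G' | ∃ v, Commute g (D'.a v)} := by rw [D'.gen]; trivial
  induction hx using Subgroup.closure_induction with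
  | mem x hx =>
    intro g τ h
    obtain ⟨v', hx⟩ := hx
    rcases D'.center_nb v' with rfl | ⟨s', hs', hc⟩
    · exact hasType_mul D D' φ hx h
    · have hmem : s' ∈ D'.per v' := by rw [hs']; exact Finset.mem_singleton_self _
      obtain ⟨σ, hσ⟩ := hasType_exists D D' φ g v'
      have h1 := hasType_nb D D' φ hmem hσ
      have h2 := hasType_nb D D' φ hmem (hasType_mul D D' φ hx hσ)
      rw [hc] at h1 h2
      rwa [hasType_unique D D' φ h h1]
  | one => intro g τ h; rwa [one_mul]
  | mul x y _ _ hx hy => intro g τ h; rw [mul_assoc]; exact hx _ _ (hy _ _ h)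
  | inv x _ hx =>
    intro g τ h
    obtain ⟨σ, hσ⟩ := hasType_exists D D' φ (x⁻¹ * g) D'.center
    have h1 := hx _ _ hσ
    rw [mul_inv_cancel_left] at h1
    rwa [hasType_unique D D' φ h h1]

/-- All the conjugates of all the pivots have the same type. -/
lemma hasType_pivot [H.FiniteIndex] :
    ∃ τ, ∀ g v', v' ≠ D'.center → HasType D D' φ g v' τ := by
  obtain ⟨τ, hτ⟩ := hasType_exists D D' φ 1 D'.center
  refine ⟨!τ, fun g v' hv' => ?_⟩
  have h1 := hasType_center D D' φ g 1 τ hτ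
  rw [mul_one] at h1
  obtain ⟨s', hs', hc⟩ := (D'.center_nb v').resolve_left hv'
  have hmem : s' ∈ D'.per v' := by rw [hs']; exact Finset.mem_singleton_self _
  obtain ⟨σ, hσ⟩ := hasType_exists D D' φ g v'
  have h2 := hasType_nb D D' φ hmem hσ
  rw [hc] at h2
  rw [hasType_unique D D' φ h1 h2, Bool.not_not]
  exact hσ

end

end TreeData

/-- A relation holding on each orbit of an action holds, by summation, on the whole set. -/
lemma orbit_sum {F X : Type} [Group F] [MulAction F X] [Fintype X] (f : X → ℕ) (p r : ℕ)
    (h : ∀ y : X, (∑ᶠ x, f (MulAction.ofQuotientStabilizer F y x)) * p =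
      r * (MulAction.stabilizer F y).index) :
    (∑ x, f x) * p = r * Fintype.card X := by
  classical
  have hΩ : Fintype (MulAction.orbitRel.Quotient F X) := Fintype.ofFinite _
  let m : X → MulAction.orbitRel.Quotient F X := fun x => Quotient.mk _ x
  have key : ∀ ω, (∑ x with m x = ω, f x) * p = r * (Finset.univ.filter fun x => m x = ω).card := by
    intro ω
    obtain ⟨y, rfl⟩ : ∃ y, m y = ω := Quotient.exists_rep ω
    have hinj := MulAction.injective_ofQuotientStabilizer F y
    have : Finite (F ⧸ MulAction.stabilizer F y) := Finite.of_injective _ hinj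
    have := Fintype.ofFinite (F ⧸ MulAction.stabilizer F y)
    have himg : (Finset.univ.filter fun x => m x = m y) =
        Finset.univ.image (MulAction.ofQuotientStabilizer F y) := by
      ext x
      simp only [Finset.mem_filter, Finset.mem_univ, true_and, Finset.mem_image]
      constructor
      · intro hx
        obtain ⟨g, rfl⟩ : x ∈ MulAction.orbit F y := MulAction.orbitRel_apply.1 (Quotient.exact hx)
        exact ⟨(g : F ⧸ MulAction.stabilizer F y), rfl⟩
      · rintro ⟨q, rfl⟩
        exact Quotient.sound (MulAction.orbitRel_apply.2
          (MulAction.ofQuotientStabilizer_mem_orbit F y q))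
    have hy := h y
    rw [finsum_eq_sum_of_fintype] at hy
    rw [himg, Finset.sum_image hinj.injOn, Finset.card_image_of_injective _ hinj, hy,
      Subgroup.index, Nat.card_eq_fintype_card, Finset.card_univ]
  rw [← Finset.sum_fiberwise Finset.univ m f, Finset.sum_mul, Finset.sum_congr rfl fun ω _ => key ω,
    ← Finset.mul_sum, ← Finset.card_univ,
    Finset.card_eq_sum_card_fiberwise (f := m) (t := Finset.univ) (by simp)]

/-- If in the first tree the number of neighbours of a non-leaf vertex and the number of its
non-leaf neighbours depend only on whether it is the center, then all the pivots of the second tree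
have the same degree. -/
theorem card_pivot_eq {G G' : Type} [Group G] [Group G'] {A : Subgroup G} {H : Subgroup G'}
    [H.FiniteIndex] [A.FiniteIndex] (D : TreeData G) (D' : TreeData G') (φ : H ≃* A)
    (hS : ∀ v w, D.cen v = D.cen w →
      Fintype.card (D.B v) = Fintype.card (D.B w) ∧ (D.per v).card = (D.per w).card)
    (v' w' : D'.V) (hv' : v' ≠ D'.center) (hw' : w' ≠ D'.center) :
    Fintype.card (D'.B v') = Fintype.card (D'.B w') := by
  classical
  obtain ⟨τ, hτ⟩ := TreeData.hasType_pivot D D' φ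
  obtain ⟨v₀, -, -, -, -, hv₀⟩ := hτ 1 v' hv'
  have : Fintype (G' ⧸ H) := Fintype.ofFinite _
  let f : G' ⧸ H → ℕ := fun x => TreeData.imgLen D D' φ D'.center x.out
  have hf : ∀ y : G', f y = TreeData.imgLen D D' φ D'.center y := by
    intro y
    obtain ⟨h, hh⟩ := QuotientGroup.mk_out_eq_mul H y
    change TreeData.imgLen D D' φ D'.center (y : G' ⧸ H).out = _
    rw [hh, TreeData.imgLen_mul]
  have main : ∀ z', z' ≠ D'.center → (∑ x, f x) * (Fintype.card (D.B v₀) - 1) =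
      H.index.factorial * (D.per v₀).card * (Fintype.card (D'.B z') - 1) *
        Fintype.card (G' ⧸ H) := by
    intro z' hz'
    obtain ⟨s', hs', hc⟩ := (D'.center_nb z').resolve_left hz'
    let : MulAction (FreeGroup (D'.B z')) (G' ⧸ H) := MulAction.compHom _ (D'.ι z')
    refine orbit_sum (F := FreeGroup (D'.B z')) f _ _ fun y => ?_
    obtain ⟨g, rfl⟩ := QuotientGroup.mk_surjective y
    have hsm : ∀ k : FreeGroup (D'.B z'), k • (g : G' ⧸ H) = ((D'.ι z' k * g : G') : G' ⧸ H) :=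
      fun k => rfl
    have hK : ∀ k, k ∈ MulAction.stabilizer (FreeGroup (D'.B z')) (g : G' ⧸ H) ↔
        D'.incl z' g⁻¹ k ∈ H := by
      intro k
      rw [MulAction.mem_stabilizer_iff, hsm, eq_comm, QuotientGroup.eq, TreeData.incl_apply,
        inv_inv, mul_assoc]
    have hfin : (MulAction.stabilizer (FreeGroup (D'.B z')) (g : G' ⧸ H)).FiniteIndex := by
      rw [show MulAction.stabilizer (FreeGroup (D'.B z')) (g : G' ⧸ H) =
        H.comap (D'.incl z' g⁻¹) from Subgroup.ext hK]
      exact finiteIndex_comap _ _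
    obtain ⟨v, b, u, hb, hu, hv⟩ := hτ g z' hz'
    obtain ⟨h1, h2⟩ := hS v₀ v (hv₀.trans hv.symm)
    rw [h1, h2]
    have := TreeData.local_sum D D' φ hb hK hu hs'
      (fun x => f (MulAction.ofQuotientStabilizer _ _ x)) (fun x => by
        rw [MulAction.ofQuotientStabilizer_mk, hsm, hf, hc])
    rw [this]
    ring
  have h1 := (main v' hv').symm.trans (main w' hw')
  have h2 : 0 < (D.per v₀).card := (D.per_nonempty v₀).card_pos
  have h3 : 0 < H.index.factorial := Nat.factorial_pos _
  have h4 : 0 < Fintype.card (G' ⧸ H) := Fintype.card_pos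
  have h5 := Nat.eq_of_mul_eq_mul_left (Nat.mul_pos h3 h2) (Nat.eq_of_mul_eq_mul_right h4 h1)
  have h6 : 0 < Fintype.card (D'.B v') := Fintype.card_pos
  have h7 : 0 < Fintype.card (D'.B w') := Fintype.card_pos
  omega

end Local

/-! ### Comparison of the two trees -/

section Final

lemma commensurable_congr {G G₁ G' G₁' : Type} [Group G] [Group G₁] [Group G'] [Group G₁']
    (e : G ≃* G₁) (e' : G' ≃* G₁') (h : GroupsCommensurable G G') :
    GroupsCommensurable G₁ G₁' := by
  obtain ⟨A, B, hA, hB, ⟨φ⟩⟩ := h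
  refine ⟨A.map (e : G →* G₁), B.map (e' : G' →* G₁'), ⟨?_⟩, ⟨?_⟩,
    ⟨((e.subgroupMap A).symm.trans φ).trans (e'.subgroupMap B)⟩⟩
  · rw [Subgroup.index_map_equiv]; exact hA.index_ne_zero
  · rw [Subgroup.index_map_equiv]; exact hB.index_ne_zero

lemma card_nbr_some {J : Type} [Fintype J] {d : J → ℕ} (j : J) :
    Fintype.card (Nbr d (some j)) = d j + 1 := by
  change Fintype.card (Option (Fin (d j))) = _
  rw [Fintype.card_option, Fintype.card_fin]

/-- If all the pivots of one tree have the same degree and the group of a second tree is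
commensurable with that of the first, then all the pivots of the second tree have the same
degree. -/
lemma degree_eq {J J' : Type} [Fintype J] [DecidableEq J] [Nontrivial J] [Fintype J']
    [DecidableEq J'] [Nontrivial J'] {d : J → ℕ} {d' : J' → ℕ} (m : ℕ) (hd : ∀ j, 0 < d j)
    (hd' : ∀ j, 0 < d' j) (hm : ∀ j, d j = m) (h : GroupsCommensurable (Model J d) (Model J' d'))
    (i j : J') : d' i = d' j := by
  obtain ⟨A, H, hA, hH, ⟨φ⟩⟩ := h
  have key := card_pivot_eq (modelData hd) (modelData hd') φ.symm ?_ (some i) (some j)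
    (Option.some_ne_none i) (Option.some_ne_none j)
  · have h1 : Fintype.card (Nbr d' (some i)) = Fintype.card (Nbr d' (some j)) := key
    rw [card_nbr_some, card_nbr_some] at h1
    exact Nat.succ_injective h1
  · intro v w hvw
    change v.isNone = w.isNone at hvw
    cases v with
    | none =>
      cases w with
      | none => exact ⟨rfl, rfl⟩
      | some j => exact absurd hvw (by simp)
    | some i =>
      cases w with
      | none => exact absurd hvw (by simp)
      | some j =>
        refine ⟨?_, ?_⟩
        · change Fintype.card (Nbr d (some i)) = Fintype.card (Nbr d (some j))
          rw [card_nbr_some, card_nbr_some, hm, hm]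
        · exact (Finset.card_singleton _).trans (Finset.card_singleton _).symm

end Final

end TreeRAAG

theorem stmt2 (m : ℕ) (hm : 0 < m) (l : ℕ) (hl : 2 ≤ l)
    (n : Fin l → ℕ) (hn : StrictMono n) (hnpos : ∀ i, 0 < n i) :
    ¬ GroupsCommensurable (RAAG (t4Graph 1 (fun _ => m) (fun _ => 2) 0))
      (RAAG (t4Graph l n (fun _ => 1) 0)) := by
  intro h
  have h' := TreeRAAG.commensurable_congr TreeRAAG.equivModel TreeRAAG.equivModel h
  have hlt : (⟨0, by omega⟩ : Fin l) < ⟨1, by omega⟩ := Fin.mk_lt_mk.2 Nat.zero_lt_one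
  have hJ : Nontrivial (Σ _ : Fin 1, Fin 2) :=
    ⟨⟨⟨0, 0⟩, ⟨0, 1⟩, fun h => absurd (congrArg (fun p => p.2.val) h) (by simp)⟩⟩
  have hJ' : Nontrivial (Σ _ : Fin l, Fin 1) :=
    ⟨⟨⟨⟨0, by omega⟩, 0⟩, ⟨⟨1, by omega⟩, 0⟩, fun h => hlt.ne (congrArg Sigma.fst h)⟩⟩
  have h1 := TreeRAAG.degree_eq (J := Σ _ : Fin 1, Fin 2) (J' := Σ _ : Fin l, Fin 1) (d := fun _ => m)
    (d' := fun p => n p.1) m (fun _ => hm) (fun p => hnpos p.1) (fun _ => rfl) h'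
    ⟨⟨0, by omega⟩, 0⟩ ⟨⟨1, by omega⟩, 0⟩
  exact (hn hlt).ne h1
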